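/- Let φ be any injective endomorphism of the free group F_n of rank n ≥ 1. Then the set of equivalence classes of attracting fixed words of φ is finite, and rk(fix(φ)) + a(φ)/2 ≤ n; equivalently, 2·rk(fix(φ)) + a(φ) ≤ 2n. -/

import Mathlib

/-!
The endomorphism `φ` acts on the vertices of the Cayley tree of `F = F_n`. Let `Per φ` be the
subgroup of elements fixed by some positive iterate of `φ`. The proof shows that `Per φ` is free of
some finite rank `r`, that `2 r + a(φ) ≤ 2 n`, and that `fix φ ≤ Per φ` has rank at most `r`.

*The key inequality.* Let `S` be a finite suffix-closed set containing the basis, let `θ` be an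
injective endomorphism (a high iterate of `φ`), and let `K` be the hull of `θ(S)`, a finite tree.
Each basis element `i` glues a subtree `A i` of `K` to its translate `θ(i) A i ⊆ K`. Comparing the
Euler characteristics of `K` and of the `A i` along the graph of gluings of special points gives
`∑ b ∈ R, (val K b - 2) ≤ 2 n - 2` for every set `R ∋ 1` of points of `K` in distinct components
(`key_inequality`).

*The periodic subgroup and attracting words.* Consider a finite part of the coset graph
`Per φ \ F`, with a Schreier transversal `B` (`Schreier`), together with pendant edges pointing
along attracting words. Since periodic elements are fixed by `φ^k` for suitable `k`, all these edges
are visible in the hull of `φ^k(S)` at the points of `B`, once `S` is large enough; the points of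
`B` lie in distinct components, because no `φ^k(g)` with `g` of bounded length carries one of them
to another: for periodic `g` they represent distinct cosets, and for other `g` the orbit leaves
every finite set (`ev_notMem`). The key inequality then bounds twice the number of Schreier
generators plus the number of pendant edges by `2 n` (`fundamental`). Bounded cancellation makes
attraction locally uniform (`Att`), and this forces far prefixes of inequivalent attracting words
into distinct cosets of `Per φ` (`prefix_coset_inj`, `equiv_of_coset`), so that every word
contributes a pendant edge of its own (`fundamental_words`).

*The fixed subgroup.* By Nielsen–Schreier and the uniform bound on finite subsets, `Per φ` is free
of finite rank (`exists_basis_of_locally`), so `φ` has finite order on it. The fixed subgroup of an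
endomorphism of finite order does not have larger rank (`fixed_finite_order`): by induction on the
order this reduces to an automorphism `β` of prime order `p`. There each Schreier generator of the
fixed subgroup has a dual homomorphism `F → ℤ/p`, the flow through a `β`-invariant almost invariant
function built from a half-space of the Cayley tree; the values at points moved by `β` cancel
modulo `p` in orbits, and the values at fixed points are read off from the half-space (`flow_σ`).
Independent homomorphisms `F → ℤ/p` number at most `n`.
-/

open Filter

namespace ZZFix

/-- A letter: a basis element together with a sign. -/
abbrev Letter (α : Type*) := α × Bool

/-- The inverse letter. -/
def linv {α : Type*} (l : Letter α) : Letter α := (l.1, !l.2)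

/-- An infinite reduced word: a sequence of letters with no adjacent cancellation. -/
def InfWord (α : Type*) : Type _ := {w : ℕ → Letter α // ∀ i, w (i + 1) ≠ linv (w i)}

/-- The length-`i` prefix of an infinite reduced word, as a list of letters. -/
def prefixList {α : Type*} (W : InfWord α) (i : ℕ) : List (Letter α) :=
  (List.range i).map W.1

/-- The length-`i` prefix of an infinite reduced word, as an element of the free group. -/
def wordPrefix {α : Type*} (W : InfWord α) (i : ℕ) : FreeGroup α :=
  FreeGroup.mk (prefixList W i)

/-- Length of the longest common prefix of two lists. -/
def commonPrefixLength {β : Type*} [DecidableEq β] : List β → List β → ℕ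
  | a :: as, b :: bs => if a = b then commonPrefixLength as bs + 1 else 0
  | _, _ => 0

variable {α : Type*} [DecidableEq α]

/-- `|W ∧ g|` for an infinite reduced word `W` and a finite reduced word `g`. -/
def wedgeF (W : InfWord α) (g : FreeGroup α) : ℕ :=
  commonPrefixLength (prefixList W (FreeGroup.toWord g).length) (FreeGroup.toWord g)

/-- `|g ∧ h|` for finite reduced words. -/
def wedgeFF (g h : FreeGroup α) : ℕ :=
  commonPrefixLength (FreeGroup.toWord g) (FreeGroup.toWord h)

/-- `|W ∧ V|` for infinite reduced words, valued in `ℕ∞` (it is `⊤` iff `W = V`). -/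
noncomputable def wedgeI {α : Type*} (W V : InfWord α) : ℕ∞ :=
  sSup ((fun i : ℕ => (i : ℕ∞)) '' {i : ℕ | prefixList W i = prefixList V i})

/-- A sequence of group elements converges to the infinite reduced word `W`
(in the initial segment metric on `F ⊔ ∂F`). -/
def ConvergesTo (u : ℕ → FreeGroup α) (W : InfWord α) : Prop :=
  Tendsto (fun i => wedgeF W (u i)) atTop atTop

/-- `W` is a fixed infinite word of `φ`: `|W ∧ φ(W_i)| → ∞`. -/
def IsFixedInfWord (φ : FreeGroup α →* FreeGroup α) (W : InfWord α) : Prop :=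
  Tendsto (fun i => wedgeF W (φ (wordPrefix W i))) atTop atTop

/-- `W` is an attracting fixed word of `φ`: it is fixed and `|W ∧ φ(W_i)| - i → +∞`. -/
def IsAttractingFixedWord (φ : FreeGroup α →* FreeGroup α) (W : InfWord α) : Prop :=
  IsFixedInfWord φ W ∧
    Tendsto (fun i => (wedgeF W (φ (wordPrefix W i)) : ℤ) - (i : ℤ)) atTop atTop

/-- The fixed subgroup of an endomorphism. -/
def fixedSubgroup {G : Type*} [Group G] (φ : G →* G) : Subgroup G where
  carrier := {g | φ g = g}
  one_mem' := map_one φ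
  mul_mem' := by
    intro a b ha hb
    simp only [Set.mem_setOf_eq] at *
    rw [map_mul, ha, hb]
  inv_mem' := by
    intro a ha
    simp only [Set.mem_setOf_eq] at *
    rw [map_inv, ha]

/-- The rank (minimal number of generators) of a subgroup, valued in `ℕ∞`. -/
noncomputable def grpRank {G : Type*} [Group G] (H : Subgroup G) : ℕ∞ :=
  sInf {k : ℕ∞ | ∃ S : Finset G, Subgroup.closure (S : Set G) = H ∧ (S.card : ℕ∞) = k}

/-- Two infinite reduced words are equivalent (w.r.t. `φ`) if `W' = U·W` for some
`U ∈ fix(φ)`, i.e. the reduced products `U·W_i` converge to `W'`. -/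
def EquivFixedWords (φ : FreeGroup α →* FreeGroup α) (W W' : InfWord α) : Prop :=
  ∃ U ∈ fixedSubgroup φ, ConvergesTo (fun i => U * wordPrefix W i) W'

/-- `a(φ)`: the number of equivalence classes of attracting fixed words, in `ℕ∞`. -/
noncomputable def aCard (φ : FreeGroup α →* FreeGroup α) : ℕ∞ :=
  ENat.card (Quot fun (W W' : {W : InfWord α // IsAttractingFixedWord φ W}) =>
    EquivFixedWords φ W.1 W'.1)

/-- The inner automorphism `i_c : g ↦ c g c⁻¹`, as a monoid homomorphism. -/
def innerAut {G : Type*} [Group G] (c : G) : G →* G := (MulAut.conj c).toMonoidHom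

/-- Two endomorphisms are similar if `ψ₂ = i_c ∘ ψ₁ ∘ i_c⁻¹` for some `c`. -/
def Similar {G : Type*} [Group G] (ψ₁ ψ₂ : G →* G) : Prop :=
  ∃ c : G, ψ₂ = ((innerAut c).comp ψ₁).comp (innerAut c⁻¹)

/-- The trace of the endomorphism of `ℤⁿ` induced by `φ` on the abelianization. -/
def abTrace {n : ℕ} (φ : FreeGroup (Fin n) →* FreeGroup (Fin n)) : ℤ :=
  ∑ i : Fin n, Multiplicative.toAdd
    ((FreeGroup.lift fun k => Multiplicative.ofAdd (if k = i then (1 : ℤ) else 0))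
      (φ (FreeGroup.of i)))

/-- The constant infinite reduced word `l l l ⋯`. -/
def constWord {α : Type*} (l : Letter α) : InfWord α :=
  ⟨fun _ => l, fun _ h => by
    have h2 := congrArg Prod.snd h
    simp [linv] at h2⟩

/-- `W` is an attracting fixed point of `φ`: it is fixed, and there is `i₀` such that
every finite or infinite reduced word `V` with `|W ∧ V| ≥ i₀` satisfies
`|W ∧ φᵖ(V)| → ∞` as `p → ∞`. -/
def IsAttractingFixedPoint (φ : FreeGroup α →* FreeGroup α) (W : InfWord α) : Prop :=
  IsFixedInfWord φ W ∧
    ∃ i₀ : ℕ,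
      (∀ g : FreeGroup α, i₀ ≤ wedgeF W g →
        Tendsto (fun p => wedgeF W ((⇑φ)^[p] g)) atTop atTop) ∧
      (∀ V : InfWord α, (i₀ : ℕ∞) ≤ wedgeI W V →
        ∀ Vs : ℕ → InfWord α, Vs 0 = V →
          (∀ p, ConvergesTo (fun i => φ (wordPrefix (Vs p) i)) (Vs (p + 1))) →
          Tendsto (fun p => wedgeI W (Vs p)) atTop atTop)

open scoped Classical in
/-- The initial segment metric. -/
noncomputable def distIS {α : Type*} (W V : InfWord α) : ℝ :=
  if W = V then 0 else 1 / (1 + ((wedgeI W V).toNat : ℝ))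


/-! ### The prefix order on a free group -/

theorem linv_linv {α : Type*} (a : Letter α) : linv (linv a) = a := by simp [linv]

theorem linv_ne {α : Type*} (a : Letter α) : linv a ≠ a := by
  intro h; have := congrArg Prod.snd h; simp [linv] at this

theorem linv_inj {α : Type*} {a b : Letter α} : linv a = linv b ↔ a = b :=
  ⟨fun h => by rw [← linv_linv a, h, linv_linv], fun h => by rw [h]⟩

/-- A letter viewed as an element of the free group. -/
def ltr {α : Type*} (a : Letter α) : FreeGroup α := FreeGroup.mk [a]

theorem ltr_true {α : Type*} (i : α) : ltr (i, true) = FreeGroup.of i := rfl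

theorem ltr_inv {α : Type*} (a : Letter α) : (ltr a)⁻¹ = ltr (linv a) := by
  simp [ltr, linv, FreeGroup.inv_mk, FreeGroup.invRev]

theorem ltr_linv {α : Type*} (a : Letter α) : ltr (linv a) = (ltr a)⁻¹ := (ltr_inv a).symm

theorem toWord_ltr (a : Letter α) : (ltr a).toWord = [a] := by
  simp [ltr, FreeGroup.toWord_mk]

theorem norm_ltr (a : Letter α) : (ltr a).norm = 1 := by
  simp [FreeGroup.norm, toWord_ltr]

theorem ltr_ne_one (a : Letter α) : ltr a ≠ 1 := by
  intro h; have := norm_ltr a; rw [h] at this; simp at this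

theorem ltr_inj {a b : Letter α} : ltr a = ltr b ↔ a = b := by
  constructor
  · intro h
    have := congrArg FreeGroup.toWord h
    simpa [toWord_ltr] using this
  · rintro rfl; rfl

theorem isReduced_cons {α : Type*} {a : Letter α} {L : List (Letter α)} :
    FreeGroup.IsReduced (a :: L) ↔ FreeGroup.IsReduced L ∧ L.head? ≠ some (linv a) := by
  cases L with
  | nil => simp [FreeGroup.IsReduced]
  | cons b t =>
    rcases a with ⟨a, s⟩; rcases b with ⟨b, s'⟩
    simp only [FreeGroup.IsReduced, List.isChain_cons_cons, List.head?_cons, linv, ne_eq,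
      Option.some.injEq, Prod.mk.injEq]
    cases s <;> cases s' <;> simp <;> grind

theorem toWord_ltr_mul (a : Letter α) (y : FreeGroup α) :
    (∃ t, y.toWord = linv a :: t ∧ (ltr a * y).toWord = t) ∨
    (y.toWord.head? ≠ some (linv a) ∧ (ltr a * y).toWord = a :: y.toWord) := by
  by_cases h : y.toWord.head? = some (linv a)
  · left
    obtain ⟨t, ht⟩ : ∃ t, y.toWord = linv a :: t := by
      cases hy : y.toWord with
      | nil => simp [hy] at h
      | cons b t => simp [hy] at h; exact ⟨t, by rw [h]⟩
    refine ⟨t, ht, ?_⟩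
    have hr : FreeGroup.IsReduced t :=
      (isReduced_cons.1 (ht ▸ FreeGroup.isReduced_toWord (x := y))).1
    have hy : y = ltr (linv a) * FreeGroup.mk t := by
      rw [← FreeGroup.mk_toWord (x := y), ht]; simp [ltr, FreeGroup.mul_mk]
    rw [hy, ltr_linv, mul_inv_cancel_left, FreeGroup.toWord_mk, hr.reduce_eq]
  · right
    refine ⟨h, ?_⟩
    have hr : FreeGroup.IsReduced (a :: y.toWord) :=
      isReduced_cons.2 ⟨FreeGroup.isReduced_toWord, h⟩
    rw [FreeGroup.toWord_mul, toWord_ltr, List.singleton_append, hr.reduce_eq]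

/-- `Pre x u` says that the reduced word `x` is an initial segment of the reduced word `u`. -/
def Pre (x u : FreeGroup α) : Prop := x.toWord <+: u.toWord

theorem toWord_of_append {u : FreeGroup α} {L M : List (Letter α)} (h : u.toWord = L ++ M) :
    (FreeGroup.mk L).toWord = L ∧ (FreeGroup.mk M).toWord = M ∧
      u = FreeGroup.mk L * FreeGroup.mk M := by
  have hr : FreeGroup.IsReduced (L ++ M) := h ▸ FreeGroup.isReduced_toWord (x := u)
  refine ⟨?_, ?_, ?_⟩
  · rw [FreeGroup.toWord_mk]; exact (hr.infix (List.prefix_append L M).isInfix).reduce_eq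
  · rw [FreeGroup.toWord_mk]; exact (hr.infix (List.suffix_append L M).isInfix).reduce_eq
  · rw [FreeGroup.mul_mk, ← h, FreeGroup.mk_toWord]

theorem toWord_mul_of_norm {x y : FreeGroup α} (h : (x * y).norm = x.norm + y.norm) :
    (x * y).toWord = x.toWord ++ y.toWord := by
  refine (FreeGroup.toWord_mul_sublist x y).eq_of_length ?_
  simpa [FreeGroup.norm] using h

theorem pre_iff {x u : FreeGroup α} : Pre x u ↔ x.norm + (x⁻¹ * u).norm = u.norm := by
  constructor
  · rintro ⟨v, hv⟩
    obtain ⟨_, h2, h3⟩ := toWord_of_append hv.symm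
    rw [FreeGroup.mk_toWord] at h3
    have : x⁻¹ * u = FreeGroup.mk v := by rw [h3]; group
    rw [this, FreeGroup.norm, FreeGroup.norm, FreeGroup.norm, h2, ← hv, List.length_append]
  · intro h
    have := toWord_mul_of_norm (x := x) (y := x⁻¹ * u) (by rw [mul_inv_cancel_left]; omega)
    rw [mul_inv_cancel_left] at this
    exact ⟨_, this.symm⟩

theorem pre_refl (x : FreeGroup α) : Pre x x := List.prefix_rfl
theorem pre_one (x : FreeGroup α) : Pre 1 x := by simp [Pre]
theorem Pre.trans {x y z : FreeGroup α} (h : Pre x y) (h' : Pre y z) : Pre x z :=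
  List.IsPrefix.trans h h'
theorem Pre.norm_le {x y : FreeGroup α} (h : Pre x y) : x.norm ≤ y.norm := h.length_le
theorem Pre.eq_of_norm {x y : FreeGroup α} (h : Pre x y) (h' : x.norm = y.norm) : x = y :=
  FreeGroup.toWord_injective (h.eq_of_length h')
theorem Pre.antisymm {x y : FreeGroup α} (h : Pre x y) (h' : Pre y x) : x = y :=
  h.eq_of_norm (le_antisymm h.norm_le h'.norm_le)
theorem pre_one_iff {x : FreeGroup α} : Pre x 1 ↔ x = 1 :=
  ⟨fun h => h.antisymm (pre_one x), fun h => h ▸ pre_refl _⟩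
theorem Pre.total {x y u : FreeGroup α} (h : Pre x u) (h' : Pre y u) (hn : x.norm ≤ y.norm) :
    Pre x y := List.prefix_of_prefix_length_le h h' hn

theorem Pre.mul_left_ltr {y v : FreeGroup α} (h : Pre y v) (a : Letter α) :
    Pre (ltr a * y) (ltr a) ∨ Pre (ltr a * y) (ltr a * v) := by
  by_cases hy : y = 1
  · left; rw [hy, mul_one]; exact pre_refl _
  right
  have hy' : y.toWord ≠ [] := fun h => hy (FreeGroup.toWord_eq_nil_iff.1 h)
  obtain ⟨w, hw⟩ := h
  rcases toWord_ltr_mul a y with ⟨t, h1, h2⟩ | ⟨h1, h2⟩ <;>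
  rcases toWord_ltr_mul a v with ⟨t', h1', h2'⟩ | ⟨h1', h2'⟩
  · refine ⟨w, ?_⟩
    rw [h2, h2']
    rw [h1, h1'] at hw
    simpa using hw
  · rw [← hw, h1] at h1'; simp at h1'
  · exfalso; apply h1
    cases hc : y.toWord with
    | nil => exact absurd hc hy'
    | cons b s =>
      rw [h1', hc] at hw
      simp at hw
      simp [hw.1]
  · refine ⟨w, ?_⟩
    rw [h2, h2', ← hw]; simp

/-- A translate `c [1, u]` of a segment is contained in `[1, c] ∪ [1, c u]`. -/
theorem Pre.mul_left {x u : FreeGroup α} (h : Pre x u) (c : FreeGroup α) :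
    Pre (c * x) c ∨ Pre (c * x) (c * u) := by
  generalize hL : c.toWord = L
  induction L generalizing c with
  | nil =>
    rw [FreeGroup.toWord_eq_nil_iff] at hL; subst hL
    right; simpa using h
  | cons a t ih =>
    obtain ⟨h1, h2, h3⟩ := toWord_of_append (L := [a]) (M := t) hL
    have h4 : c = ltr a * FreeGroup.mk t := h3
    have hac : Pre (ltr a) c := by rw [Pre, toWord_ltr, hL]; exact List.prefix_append [a] t
    rw [h4] at hac ⊢
    simp only [mul_assoc]
    rcases ih _ h2 with h | h
    · rcases h.mul_left_ltr a with h | h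
      · exact Or.inl (h.trans hac)
      · exact Or.inl h
    · rcases h.mul_left_ltr a with h | h
      · exact Or.inl (h.trans hac)
      · exact Or.inr h

theorem pre_mul_ltr (x : FreeGroup α) (a : Letter α) :
    (Pre x (x * ltr a) ∧ (x * ltr a).norm = x.norm + 1) ∨
    (Pre (x * ltr a) x ∧ x.norm = (x * ltr a).norm + 1) := by
  simp only [pre_iff, mul_one, mul_inv_rev, mul_assoc, inv_mul_cancel, inv_mul_cancel_left,
    ltr_inv, norm_ltr]
  have h2 := FreeGroup.norm_inv_eq (x := x * ltr a)
  have h1 := FreeGroup.norm_inv_eq (x := x)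
  rw [mul_inv_rev, ltr_inv] at h2
  have h3 := toWord_ltr_mul (linv a) x⁻¹
  rcases h3 with ⟨t, h3, h4⟩ | ⟨h3, h4⟩
  · right
    have e1 := congrArg List.length h3
    have e2 := congrArg List.length h4
    simp only [FreeGroup.norm, List.length_cons] at *
    omega
  · left
    have e2 := congrArg List.length h4
    simp only [FreeGroup.norm, List.length_cons] at *
    omega

theorem exists_last {u : FreeGroup α} (h : u ≠ 1) :
    ∃ x a, u = x * ltr a ∧ Pre x u ∧ u.norm = x.norm + 1 := by
  have hne : u.toWord ≠ [] := fun h' => h (FreeGroup.toWord_eq_nil_iff.1 h')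
  obtain ⟨L, a, hL⟩ := List.eq_nil_or_concat u.toWord |>.resolve_left hne
  rw [List.concat_eq_append] at hL
  obtain ⟨h1, h2, h3⟩ := toWord_of_append hL
  refine ⟨FreeGroup.mk L, a, h3, ?_, ?_⟩
  · rw [Pre, h1, hL]; exact List.prefix_append _ _
  · rw [FreeGroup.norm, FreeGroup.norm, h1, hL]; simp

theorem exists_first {u : FreeGroup α} (h : u ≠ 1) :
    ∃ x a, u = ltr a * x ∧ Pre (ltr a) u ∧ u.norm = x.norm + 1 := by
  cases hu : u.toWord with
  | nil => exact absurd (FreeGroup.toWord_eq_nil_iff.1 hu) h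
  | cons a t =>
    obtain ⟨h1, h2, h3⟩ := toWord_of_append (L := [a]) (M := t) hu
    refine ⟨FreeGroup.mk t, a, h3, ?_, ?_⟩
    · rw [Pre, toWord_ltr, hu]; exact List.prefix_append [a] t
    · rw [FreeGroup.norm, FreeGroup.norm, h2, hu]; simp

theorem pre_ltr_iff {a : Letter α} {u : FreeGroup α} :
    Pre (ltr a) u ↔ u.toWord.head? = some a := by
  rw [Pre, toWord_ltr]
  cases u.toWord with
  | nil => simp
  | cons b t => simp [List.cons_prefix_cons, eq_comm]

theorem pre_ltr_unique {a b : Letter α} {u : FreeGroup α} (h : Pre (ltr a) u)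
    (h' : Pre (ltr b) u) : a = b := by
  rw [pre_ltr_iff] at h h'; rw [h] at h'; simpa using h'

theorem Pre.next {x u : FreeGroup α} (h : Pre x u) (hne : x ≠ u) :
    ∃ a, Pre (x * ltr a) u ∧ (x * ltr a).norm = x.norm + 1 := by
  obtain ⟨v, hv⟩ := h
  cases v with
  | nil => exact absurd (FreeGroup.toWord_injective (by simpa using hv)) hne
  | cons a t =>
    have hv' : u.toWord = (x.toWord ++ [a]) ++ t := by simp [← hv]
    obtain ⟨h1, _, _⟩ := toWord_of_append hv'
    have hx : x * ltr a = FreeGroup.mk (x.toWord ++ [a]) := by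
      rw [← FreeGroup.mul_mk, FreeGroup.mk_toWord]; rfl
    refine ⟨a, ?_, ?_⟩
    · rw [Pre, hx, h1, hv']; exact List.prefix_append _ _
    · rw [FreeGroup.norm, hx, h1]; simp [FreeGroup.norm]

theorem Pre.inv_mul {x y u : FreeGroup α} (h : Pre x y) (h' : Pre y u) :
    Pre (x⁻¹ * y) (x⁻¹ * u) := by
  have h3 := h.trans h'
  rw [pre_iff] at *
  have : (x⁻¹ * y)⁻¹ * (x⁻¹ * u) = y⁻¹ * u := by group
  rw [this]; omega

/-- If `x` is a prefix of `u`, then `x⁻¹ u` is a suffix of `u`: after inversion, `u⁻¹ x` is a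
prefix of `u⁻¹`. -/
theorem Pre.inv {x u : FreeGroup α} (h : Pre x u) : Pre (u⁻¹ * x) u⁻¹ := by
  rw [pre_iff] at *
  have h1 : (u⁻¹ * x)⁻¹ * u⁻¹ = x⁻¹ := by group
  have h2 := FreeGroup.norm_inv_eq (x := x⁻¹ * u)
  rw [h1, FreeGroup.norm_inv_eq, FreeGroup.norm_inv_eq]
  rw [mul_inv_rev, inv_inv] at h2
  omega

theorem finite_norm_le [Finite α] (R : ℕ) : {g : FreeGroup α | g.norm ≤ R}.Finite := by
  have : {L : List (Letter α) | L.length ≤ R}.Finite := List.finite_length_le _ R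
  exact (this.preimage (f := FreeGroup.toWord) FreeGroup.toWord_injective.injOn)

theorem norm_le_of_le (u v : FreeGroup α) : u.norm ≤ v.norm + (v⁻¹ * u).norm := by
  have := FreeGroup.norm_mul_le v (v⁻¹ * u)
  rwa [mul_inv_cancel_left] at this

theorem dist_comm (u v : FreeGroup α) : (u⁻¹ * v).norm = (v⁻¹ * u).norm := by
  rw [← FreeGroup.norm_inv_eq]; congr 1; group

theorem dist_tri (u v w : FreeGroup α) :
    (u⁻¹ * w).norm ≤ (u⁻¹ * v).norm + (v⁻¹ * w).norm := by
  have := FreeGroup.norm_mul_le (u⁻¹ * v) (v⁻¹ * w)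
  rwa [show u⁻¹ * v * (v⁻¹ * w) = u⁻¹ * w by group] at this

/-- Two prefixes of the same words that branch off each other. -/
theorem mul_ltr_eq_of_pre {x u : FreeGroup α} {a b : Letter α} (ha : Pre (x * ltr a) u)
    (hb : Pre (x * ltr b) u) (ha' : (x * ltr a).norm = x.norm + 1)
    (hb' : (x * ltr b).norm = x.norm + 1) : a = b := by
  have := (ha.total hb (by omega)).eq_of_norm (by omega)
  exact ltr_inj.1 (mul_left_cancel this)

/-! ### Counting edges of finite subtrees of the Cayley tree -/

/-- A finite set containing `1` and closed under prefixes: a finite subtree of the Cayley tree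
through the base point. -/
def PC (K : Finset (FreeGroup α)) : Prop :=
  1 ∈ K ∧ ∀ x u, Pre x u → u ∈ K → x ∈ K

/-- The prefix closure of a finite set of words. -/
def pcl (Q : Finset (FreeGroup α)) : Finset (FreeGroup α) :=
  Q.biUnion fun u => (u.toWord.inits.map FreeGroup.mk).toFinset

theorem mem_pcl {Q : Finset (FreeGroup α)} {x : FreeGroup α} :
    x ∈ pcl Q ↔ ∃ u ∈ Q, Pre x u := by
  simp only [pcl, Finset.mem_biUnion, List.mem_toFinset, List.mem_map, List.mem_inits]
  constructor
  · rintro ⟨u, hu, L, ⟨M, hM⟩, rfl⟩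
    refine ⟨u, hu, ?_⟩
    rw [Pre, (toWord_of_append hM.symm).1]
    exact ⟨M, hM⟩
  · rintro ⟨u, hu, h⟩
    exact ⟨u, hu, _, h, FreeGroup.mk_toWord⟩

theorem subset_pcl (Q : Finset (FreeGroup α)) : Q ⊆ pcl Q :=
  fun x hx => mem_pcl.2 ⟨x, hx, pre_refl x⟩

theorem pcl_mono {Q Q' : Finset (FreeGroup α)} (h : Q ⊆ Q') : pcl Q ⊆ pcl Q' := fun x hx => by
  obtain ⟨u, hu, hp⟩ := mem_pcl.1 hx
  exact mem_pcl.2 ⟨u, h hu, hp⟩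

theorem pc_pcl {Q : Finset (FreeGroup α)} (h : Q.Nonempty) : PC (pcl Q) := by
  obtain ⟨q, hq⟩ := h
  refine ⟨mem_pcl.2 ⟨q, hq, pre_one q⟩, fun x u hx hu => ?_⟩
  obtain ⟨v, hv, h⟩ := mem_pcl.1 hu
  exact mem_pcl.2 ⟨v, hv, hx.trans h⟩

theorem last_unique {x y : FreeGroup α} {a b : Letter α} (h : x * ltr a = y * ltr b)
    (hx : (x * ltr a).norm = x.norm + 1) (hy : (y * ltr b).norm = y.norm + 1) :
    x = y ∧ a = b := by
  have h1 : Pre x (x * ltr a) := by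
    rcases pre_mul_ltr x a with h | h
    · exact h.1
    · omega
  have h2 : Pre y (x * ltr a) := by
    rw [h]
    rcases pre_mul_ltr y b with h | h
    · exact h.1
    · omega
  have h3 : x.norm = y.norm := by rw [h] at hx; omega
  have h4 : x = y := (h1.total h2 h3.le).eq_of_norm h3
  subst h4
  exact ⟨rfl, ltr_inj.1 (mul_left_cancel h)⟩

section
variable [Fintype α]

/-- The valence of `x` in the subgraph of the Cayley tree spanned by `K`. -/
def val (K : Finset (FreeGroup α)) (x : FreeGroup α) : ℕ :=
  (Finset.univ.filter fun a : Letter α => x * ltr a ∈ K).card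

theorem val_mono {K K' : Finset (FreeGroup α)} {x y : FreeGroup α}
    (h : ∀ a, x * ltr a ∈ K → y * ltr a ∈ K') : val K x ≤ val K' y :=
  Finset.card_le_card fun a => by simpa using h a

/-- A finite tree with `k` vertices has `k - 1` edges. -/
theorem sum_val {K : Finset (FreeGroup α)} (hK : PC K) :
    ∑ x ∈ K, ((val K x : ℤ) - 2) = -2 := by
  classical
  have hpos : 0 < K.card := Finset.card_pos.2 ⟨1, hK.1⟩
  have key : ∑ x ∈ K, val K x = (K.card - 1) + (K.card - 1) := by
    have e1 : ∑ x ∈ K, val K x =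
        ((K ×ˢ (Finset.univ : Finset (Letter α))).filter fun p => p.1 * ltr p.2 ∈ K).card := by
      rw [Finset.card_filter, Finset.sum_product]
      refine Finset.sum_congr rfl fun x _ => ?_
      rw [val, Finset.card_filter]
    rw [e1, ← Finset.card_filter_add_card_filter_not
      (fun p : FreeGroup α × Letter α => (p.1 * ltr p.2).norm = p.1.norm + 1)]
    have hc : (K.erase 1).card = K.card - 1 := Finset.card_erase_of_mem hK.1
    rw [← hc]
    congr 1
    · refine Finset.card_bij (fun p _ => p.1 * ltr p.2) ?_ ?_ ?_
      · rintro ⟨x, a⟩ h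
        simp only [Finset.mem_filter, Finset.mem_product, Finset.mem_univ, and_true] at h
        refine Finset.mem_erase.2 ⟨fun h1 => ?_, h.1.2⟩
        rw [h1] at h; simp at h
      · rintro ⟨x, a⟩ h ⟨y, b⟩ h' e
        simp only [Finset.mem_filter, Finset.mem_product, Finset.mem_univ, and_true] at h h' e
        obtain ⟨rfl, rfl⟩ := last_unique e h.2 h'.2
        rfl
      · intro u hu
        obtain ⟨hu1, hu2⟩ := Finset.mem_erase.1 hu
        obtain ⟨x, a, rfl, h1, h2⟩ := exists_last hu1
        refine ⟨(x, a), ?_, rfl⟩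
        simp only [Finset.mem_filter, Finset.mem_product, Finset.mem_univ, and_true]
        exact ⟨⟨hK.2 _ _ h1 hu2, hu2⟩, h2⟩
    · refine Finset.card_bij (fun p _ => p.1) ?_ ?_ ?_
      · rintro ⟨x, a⟩ h
        simp only [Finset.mem_filter, Finset.mem_product, Finset.mem_univ, and_true] at h
        refine Finset.mem_erase.2 ⟨fun h1 => h.2 ?_, h.1.1⟩
        simp only at h1
        rw [h1]; simp [norm_ltr]
      · rintro ⟨x, a⟩ h ⟨y, b⟩ h' e
        simp only [Finset.mem_filter, Finset.mem_product, Finset.mem_univ, and_true] at h h' e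
        subst e
        have q1 := (pre_mul_ltr x a).resolve_left fun q => h.2 q.2
        have q2 := (pre_mul_ltr x b).resolve_left fun q => h'.2 q.2
        have := (q1.1.total q2.1 (by omega)).eq_of_norm (by omega)
        rw [ltr_inj.1 (mul_left_cancel this)]
      · intro u hu
        obtain ⟨hu1, hu2⟩ := Finset.mem_erase.1 hu
        obtain ⟨x, a, rfl, h1, h2⟩ := exists_last hu1
        refine ⟨(x * ltr a, linv a), ?_, rfl⟩
        simp only [Finset.mem_filter, Finset.mem_product, Finset.mem_univ, and_true, ltr_linv,
          mul_inv_cancel_right]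
        exact ⟨⟨hu2, hK.2 _ _ h1 hu2⟩, by omega⟩
  rw [Finset.sum_sub_distrib, ← Nat.cast_sum, key, Finset.sum_const]
  push_cast [Nat.sub_add_cancel hpos, Nat.cast_sub (show 1 ≤ K.card from hpos)]
  simp
  ring

/-- A vertex of the hull of `Q ∋ 1` outside `Q` is not a leaf. -/
theorem two_le_val_pcl {Q : Finset (FreeGroup α)} (h1 : 1 ∈ Q) {x : FreeGroup α}
    (hx : x ∈ pcl Q) (hxQ : x ∉ Q) : 2 ≤ val (pcl Q) x := by
  have hpc := pc_pcl ⟨1, h1⟩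
  have hx1 : x ≠ 1 := by rintro rfl; exact hxQ h1
  obtain ⟨u, hu, hp⟩ := mem_pcl.1 hx
  obtain ⟨b, hb, hbn⟩ := hp.next (by rintro rfl; exact hxQ hu)
  obtain ⟨y, a, rfl, h2, h3⟩ := exists_last hx1
  have : ({linv a, b} : Finset (Letter α)).card = 2 := by
    refine Finset.card_pair fun e => ?_
    rw [← e, ltr_linv, mul_inv_cancel_right] at hbn
    omega
  rw [val, ← this]
  refine Finset.card_le_card fun c hc => ?_
  simp only [Finset.mem_insert, Finset.mem_singleton] at hc
  simp only [Finset.mem_filter, Finset.mem_univ, true_and]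
  rcases hc with rfl | rfl
  · rw [ltr_linv, mul_inv_cancel_right]; exact hpc.2 _ _ h2 hx
  · exact mem_pcl.2 ⟨u, hu, hb⟩

/-- A nontrivial finite tree has no isolated vertices. -/
theorem one_le_val {K : Finset (FreeGroup α)} (hK : PC K) {x : FreeGroup α} (hx : x ∈ K)
    (hx1 : x ≠ 1) : 1 ≤ val K x := by
  obtain ⟨y, a, rfl, h2, h3⟩ := exists_last hx1
  refine Finset.card_pos.2 ⟨linv a, ?_⟩
  simp only [Finset.mem_filter, Finset.mem_univ, true_and, ltr_linv, mul_inv_cancel_right]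
  exact hK.2 _ _ h2 hx

end

/-! ### The key inequality -/

theorem pcl_image_translate {θ : FreeGroup α →* FreeGroup α} {S : Finset (FreeGroup α)}
    (hof : ∀ i, FreeGroup.of i ∈ S) (i : α) {x : FreeGroup α}
    (hx : x ∈ pcl ((S.filter fun g => FreeGroup.of i * g ∈ S).image θ)) :
    x ∈ pcl (S.image θ) ∧ θ (FreeGroup.of i) * x ∈ pcl (S.image θ) := by
  refine ⟨pcl_mono (Finset.image_subset_image (Finset.filter_subset _ _)) hx, ?_⟩
  obtain ⟨u, hu, hp⟩ := mem_pcl.1 hx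
  obtain ⟨g, hg, rfl⟩ := Finset.mem_image.1 hu
  rcases hp.mul_left (θ (FreeGroup.of i)) with h | h
  · exact mem_pcl.2 ⟨_, Finset.mem_image_of_mem θ (hof i), h⟩
  · rw [← map_mul] at h
    exact mem_pcl.2 ⟨_, Finset.mem_image_of_mem θ (Finset.mem_filter.1 hg).2, h⟩

section
variable [Fintype α]

/-- The hull of `Q` has at most `2 * |Q|` vertices of valence at least three. -/
theorem card_branch_le {Q : Finset (FreeGroup α)} (h1 : 1 ∈ Q) :
    ((pcl Q).filter fun x => 3 ≤ val (pcl Q) x ∨ x ∈ Q).card ≤ 3 * Q.card := by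
  have hs := sum_val (pc_pcl ⟨1, h1⟩)
  have hQ := subset_pcl Q
  have hle : ∑ x ∈ pcl Q, ((if 3 ≤ val (pcl Q) x ∨ x ∈ Q then (1 : ℤ) else 0) +
      (if x ∈ Q then (-3 : ℤ) else 0)) ≤ ∑ x ∈ pcl Q, ((val (pcl Q) x : ℤ) - 2) := by
    refine Finset.sum_le_sum fun x hx => ?_
    by_cases hxQ : x ∈ Q
    · simp only [hxQ, or_true, if_true]; omega
    · have := two_le_val_pcl h1 hx hxQ
      simp only [hxQ, or_false, if_false]
      split_ifs <;> omega
  rw [hs, Finset.sum_add_distrib, ← Finset.sum_filter, ← Finset.sum_filter,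
    Finset.filter_mem_eq_inter, Finset.inter_eq_right.2 hQ] at hle
  simp only [Finset.sum_const, nsmul_eq_mul] at hle
  omega

open Classical in
/-- Let `K` be the hull of `θ(S)`. Each generator `i` glues a subtree `A i` of `K` to its translate
`θ(i) A i ⊆ K`; the Euler characteristics of `K` and of the `A i`, compared along the graph whose
edges are the gluings of special points, bound the total valence excess at the points of `R`,
provided these lie in different components. -/
theorem key_inequality (θ : FreeGroup α →* FreeGroup α) (hθ : Function.Injective θ)
    (S : Finset (FreeGroup α)) (h1 : 1 ∈ S) (hof : ∀ i, FreeGroup.of i ∈ S)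
    (hsuf : ∀ a g, ltr a * g ∈ S → (ltr a * g).norm = g.norm + 1 → g ∈ S)
    (R : Finset (FreeGroup α)) (hR1 : 1 ∈ R) (hRK : R ⊆ pcl (S.image θ))
    (hsep : ∀ b ∈ R, ∀ b' ∈ R, ∀ g : FreeGroup α,
      g.norm ≤ Fintype.card α * (3 * S.card) → θ g * b = b' → b = b') :
    ∑ b ∈ R, ((val (pcl (S.image θ)) b : ℤ) - 2) ≤ 2 * Fintype.card α - 2 := by
  set K := pcl (S.image θ) with hK
  have hθ1 : (1 : FreeGroup α) ∈ S.image θ := Finset.mem_image.2 ⟨1, h1, map_one θ⟩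
  have hKpc : PC K := pc_pcl ⟨1, hθ1⟩
  let Q : α → Finset (FreeGroup α) := fun i =>
    (S.filter fun g => FreeGroup.of i * g ∈ S).image θ
  have hQ1 : ∀ i, (1 : FreeGroup α) ∈ Q i := fun i =>
    Finset.mem_image.2 ⟨1, by simp [h1, hof i], map_one θ⟩
  let A : α → Finset (FreeGroup α) := fun i => pcl (Q i)
  have hA : ∀ i x, x ∈ A i → x ∈ K ∧ θ (FreeGroup.of i) * x ∈ K := fun i x hx =>
    pcl_image_translate hof i hx
  have hval1 : ∀ i x, val (A i) x ≤ val K x := fun i x =>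
    val_mono fun a h => (hA i _ h).1
  have hval2 : ∀ i x, val (A i) x ≤ val K (θ (FreeGroup.of i) * x) := fun i x =>
    val_mono fun a h => by rw [mul_assoc]; exact (hA i _ h).2
  -- the finite set of special gluings: at branch points and at the images of elements of `S`
  let E' : α → Finset (FreeGroup α) := fun i =>
    (A i).filter fun x => 3 ≤ val (A i) x ∨ x ∈ Q i
  let E : Finset (Σ _ : α, FreeGroup α) := Finset.univ.sigma E'
  have hE : ∀ e, e ∈ E ↔ e.2 ∈ E' e.1 := fun e => by simp [E]
  have hEA : ∀ e, e ∈ E → e.2 ∈ A e.1 := fun e he => (Finset.mem_filter.1 ((hE e).1 he)).1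
  have hEcard : E.card ≤ Fintype.card α * (3 * S.card) := by
    rw [Finset.card_sigma]
    calc ∑ i, (E' i).card ≤ ∑ _i : α, 3 * S.card := by
          refine Finset.sum_le_sum fun i _ => (card_branch_le (hQ1 i)).trans ?_
          have : (Q i).card ≤ S.card := Finset.card_image_le.trans (Finset.card_filter_le S _)
          omega
      _ = _ := by simp
  have hEsum : ∑ e ∈ E, ((val (A e.1) e.2 : ℤ) - 2) = -2 * Fintype.card α := by
    rw [Finset.sum_sigma]
    have : ∀ i ∈ (Finset.univ : Finset α), ∑ x ∈ E' i, ((val (A i) x : ℤ) - 2) = -2 := by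
      intro i _
      rw [← sum_val (pc_pcl ⟨1, hQ1 i⟩)]
      refine Finset.sum_subset (Finset.filter_subset _ _) fun x hx hx' => ?_
      have hn : ¬ (3 ≤ val (A i) x ∨ x ∈ Q i) := fun h => hx' (Finset.mem_filter.2 ⟨hx, h⟩)
      push Not at hn
      have := two_le_val_pcl (hQ1 i) hx hn.2
      have h3 := hn.1
      simp only [A] at h3 ⊢
      omega
    rw [Finset.sum_congr rfl this]
    simp; ring
  -- the graph of special gluings
  let G : SimpleGraph (FreeGroup α) := SimpleGraph.fromEdgeSet
    ((E.image fun e => s(e.2, θ (FreeGroup.of e.1) * e.2) : Finset (Sym2 (FreeGroup α))) :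
      Set (Sym2 (FreeGroup α)))
  have hofne : ∀ (i : α) (x : FreeGroup α), x ≠ θ (FreeGroup.of i) * x := fun i x h => by
    have h2 : θ (FreeGroup.of i) = θ 1 := by rw [map_one]; exact right_eq_mul.1 h
    exact FreeGroup.of_ne_one i (hθ h2)
  have hadj : ∀ e ∈ E, G.Adj e.2 (θ (FreeGroup.of e.1) * e.2) := fun e he => by
    rw [SimpleGraph.fromEdgeSet_adj]
    exact ⟨Finset.mem_coe.2 (Finset.mem_image.2 ⟨e, he, rfl⟩), hofne _ _⟩
  have hwalk : ∀ x y (w : G.Walk x y), ∃ g : FreeGroup α, g.norm ≤ w.length ∧ θ g * x = y := by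
    intro x y w
    induction w with
    | nil => exact ⟨1, by simp, by simp⟩
    | @cons u v y h w ih =>
      obtain ⟨g, hg, he⟩ := ih
      obtain ⟨h, _⟩ := (SimpleGraph.fromEdgeSet_adj _).1 h
      obtain ⟨e, heE, hs⟩ := Finset.mem_image.1 (Finset.mem_coe.1 h)
      have hn1 : (FreeGroup.of e.1).norm = 1 := FreeGroup.norm_of _
      rcases Sym2.eq_iff.1 hs with ⟨h1, h2⟩ | ⟨h1, h2⟩
      · refine ⟨g * FreeGroup.of e.1, ?_, ?_⟩
        · have := FreeGroup.norm_mul_le g (FreeGroup.of e.1)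
          rw [SimpleGraph.Walk.length_cons]; omega
        · rw [map_mul, mul_assoc, ← h1, h2, he]
      · refine ⟨g * (FreeGroup.of e.1)⁻¹, ?_, ?_⟩
        · have := FreeGroup.norm_mul_le g (FreeGroup.of e.1)⁻¹
          rw [FreeGroup.norm_inv_eq] at this
          rw [SimpleGraph.Walk.length_cons]; omega
        · rw [map_mul, mul_assoc, ← h2, map_inv, inv_mul_cancel_left, h1, he]
  have hreach : ∀ x y, G.Reachable x y →
      ∃ g : FreeGroup α, g.norm ≤ Fintype.card α * (3 * S.card) ∧ θ g * x = y := by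
    rintro x y ⟨w⟩
    obtain ⟨g, hg, he⟩ := hwalk x y (w.toPath : G.Walk x y)
    refine ⟨g, hg.trans (le_trans ?_ hEcard), he⟩
    have hnd := w.toPath.2.isTrail.edges_nodup
    rw [← SimpleGraph.Walk.length_edges, ← List.toFinset_card_of_nodup hnd]
    refine le_trans (Finset.card_le_card ?_) (Finset.card_image_le (s := E)
      (f := fun e => s(e.2, θ (FreeGroup.of e.1) * e.2)))
    intro d hd
    have := SimpleGraph.Walk.edges_subset_edgeSet _ (List.mem_toFinset.1 hd)
    rw [SimpleGraph.edgeSet_fromEdgeSet] at this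
    exact Finset.mem_coe.1 this.1
  -- a root in each component, chosen in `R` where possible
  let root : G.ConnectedComponent → FreeGroup α := fun c =>
    if h : ∃ b ∈ R, G.connectedComponentMk b = c then h.choose else c.out
  have hroot : ∀ c, G.connectedComponentMk (root c) = c := by
    intro c
    by_cases h : ∃ b ∈ R, G.connectedComponentMk b = c
    · simp only [root, dif_pos h]; exact h.choose_spec.2
    · simp only [root, dif_neg h]; exact Quot.out_eq c
  let ρ : FreeGroup α → FreeGroup α := fun x => root (G.connectedComponentMk x)
  have hρR : ∀ b ∈ R, ρ b = b := by
    intro b hb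
    have h : ∃ b' ∈ R, G.connectedComponentMk b' = G.connectedComponentMk b := ⟨b, hb, rfl⟩
    have hc : ρ b = h.choose := by simp only [ρ, root, dif_pos h]
    obtain ⟨h2, h3⟩ := h.choose_spec
    rw [← hc] at h2 h3
    obtain ⟨g, hg, hgb⟩ := hreach _ _ (SimpleGraph.ConnectedComponent.exact h3)
    exact hsep _ h2 _ hb g hg hgb
  have hρg : ∀ x, ∃ g, θ g * ρ x = x := fun x => by
    obtain ⟨g, _, h⟩ := hreach _ _ (SimpleGraph.ConnectedComponent.exact
      (hroot (G.connectedComponentMk x)))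
    exact ⟨g, h⟩
  choose γ hγ using hρg
  have hρE : ∀ e ∈ E, ρ (θ (FreeGroup.of e.1) * e.2) = ρ e.2 := fun e he => by
    simp only [ρ]
    rw [SimpleGraph.ConnectedComponent.sound (hadj e he).reachable]
  have hγu : ∀ x g, θ g * ρ x = x → γ x = g := fun x g h =>
    hθ (mul_right_cancel ((hγ x).trans h.symm))
  have hγE : ∀ e ∈ E, γ (θ (FreeGroup.of e.1) * e.2) = FreeGroup.of e.1 * γ e.2 := fun e he =>
    hγu _ _ (by rw [hρE e he, map_mul, mul_assoc, hγ])
  -- the end of a gluing farther from the root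
  let t : (Σ _ : α, FreeGroup α) → FreeGroup α := fun e =>
    if (FreeGroup.of e.1 * γ e.2).norm = (γ e.2).norm + 1 then θ (FreeGroup.of e.1) * e.2 else e.2
  have hfirst : ∀ e ∈ E,
      (t e = θ (FreeGroup.of e.1) * e.2 ∧ Pre (ltr (e.1, true)) (γ (t e))) ∨
      (t e = e.2 ∧ Pre (ltr (e.1, false)) (γ (t e))) := by
    intro e he
    by_cases h : (FreeGroup.of e.1 * γ e.2).norm = (γ e.2).norm + 1
    · left
      have ht : t e = θ (FreeGroup.of e.1) * e.2 := by simp only [t, if_pos h]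
      refine ⟨ht, ?_⟩
      rw [ht, hγE e he, pre_iff, ltr_true, inv_mul_cancel_left, h, FreeGroup.norm_of, add_comm]
    · right
      have ht : t e = e.2 := by simp only [t, if_neg h]
      refine ⟨ht, ?_⟩
      rw [ht]
      rcases toWord_ltr_mul (e.1, true) (γ e.2) with ⟨s, h2, h3⟩ | ⟨_, h3⟩
      · rw [pre_ltr_iff, h2]; rfl
      · exfalso; apply h
        rw [ltr_true] at h3
        simp [FreeGroup.norm, h3]
  have htinj : Set.InjOn t (E : Set (Σ _ : α, FreeGroup α)) := by
    intro e he e' he' hee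
    rcases hfirst e he with ⟨h1, h2⟩ | ⟨h1, h2⟩ <;>
    rcases hfirst e' he' with ⟨h1', h2'⟩ | ⟨h1', h2'⟩ <;>
    · rw [← hee] at h2'
      have hl := pre_ltr_unique h2 h2'
      first
      | (exfalso; simpa using congrArg Prod.snd hl)
      | (have hi : e.1 = e'.1 := congrArg Prod.fst hl
         rw [h1, h1'] at hee
         rcases e with ⟨i, x⟩; rcases e' with ⟨i', x'⟩
         simp only at hi hee
         subst hi
         first
         | rw [mul_left_cancel hee]
         | rw [hee])
  have htR : ∀ e ∈ E, t e ∉ R := by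
    intro e he hR
    have h1 : γ (t e) = 1 := hγu _ _ (by rw [hρR _ hR, map_one, one_mul])
    rcases hfirst e he with ⟨_, h2⟩ | ⟨_, h2⟩ <;>
    · rw [h1, pre_one_iff] at h2; exact ltr_ne_one _ h2
  have htK : ∀ e ∈ E, t e ∈ K ∧ val (A e.1) e.2 ≤ val K (t e) := by
    intro e he
    rcases hfirst e he with ⟨h, _⟩ | ⟨h, _⟩ <;> rw [h]
    · exact ⟨(hA _ _ (hEA e he)).2, hval2 _ _⟩
    · exact ⟨(hA _ _ (hEA e he)).1, hval1 _ _⟩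
  -- the images of elements of `S` lie in the component of `1`
  have hEmem : ∀ (i : α) (g : FreeGroup α), g ∈ S → FreeGroup.of i * g ∈ S →
      (⟨i, θ g⟩ : Σ _ : α, FreeGroup α) ∈ E := by
    intro i g hg hg'
    have : θ g ∈ Q i := Finset.mem_image_of_mem _ (Finset.mem_filter.2 ⟨hg, hg'⟩)
    rw [hE]
    exact Finset.mem_filter.2 ⟨subset_pcl _ this, Or.inr this⟩
  have hstep : ∀ (a : Letter α) (g : FreeGroup α), g ∈ S → ltr a * g ∈ S →
      ρ (θ (ltr a * g)) = ρ (θ g) := by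
    rintro ⟨i, s⟩ g hg hg'
    cases s with
    | true =>
      have := hρE _ (hEmem i g hg hg')
      rwa [← map_mul] at this
    | false =>
      have hi : ltr (i, false) = (FreeGroup.of i)⁻¹ := by rw [← ltr_true, ltr_inv]; rfl
      have := hρE _ (hEmem i (ltr (i, false) * g) hg' (by rwa [hi, mul_inv_cancel_left]))
      simp only at this
      rw [← map_mul, hi, mul_inv_cancel_left] at this
      rw [hi]; exact this.symm
  have hρS : ∀ m (g : FreeGroup α), g.norm = m → g ∈ S → ρ (θ g) = 1 := by
    intro m
    induction m with
    | zero =>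
      intro g hg _
      rw [FreeGroup.norm_eq_zero] at hg
      rw [hg, map_one]; exact hρR 1 hR1
    | succ m ih =>
      intro g hg hgS
      obtain ⟨g', a, rfl, _, h⟩ := exists_first (u := g) (by rintro rfl; simp at hg)
      have hg' := hsuf a g' hgS h
      rw [hstep a g' hg' hgS]
      exact ih g' (by omega) hg'
  have hleaf : ∀ z ∈ K, z ∉ R → z ∉ E.image t → 2 ≤ val K z := by
    intro z hz hzR hzt
    by_contra hlt
    have hzS : z ∈ S.image θ := by
      by_contra hzS
      exact hlt (two_le_val_pcl hθ1 hz hzS)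
    obtain ⟨g, hg, rfl⟩ := Finset.mem_image.1 hzS
    have hg1 : g ≠ 1 := by rintro rfl; rw [map_one] at hzR; exact hzR hR1
    have hγS : ∀ g ∈ S, γ (θ g) = g := fun g hg =>
      hγu _ _ (by rw [hρS _ g rfl hg, mul_one])
    obtain ⟨g', ⟨i, s⟩, rfl, _, h⟩ := exists_first hg1
    have hg' := hsuf _ g' hg h
    apply hzt
    cases s with
    | true =>
      rw [ltr_true] at hg h ⊢
      refine Finset.mem_image.2 ⟨⟨i, θ g'⟩, hEmem i g' hg' hg, ?_⟩
      simp only [t, hγS g' hg', if_pos h, map_mul]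
    | false =>
      have hi : ltr (i, false) = (FreeGroup.of i)⁻¹ := by rw [← ltr_true, ltr_inv]; rfl
      refine Finset.mem_image.2 ⟨⟨i, θ (ltr (i, false) * g')⟩,
        hEmem i _ hg (by rwa [hi, mul_inv_cancel_left]), ?_⟩
      have hne : ¬ ((FreeGroup.of i * (ltr (i, false) * g')).norm =
          (ltr (i, false) * g').norm + 1) := by
        rw [h, hi, mul_inv_cancel_left]; omega
      simp only [t, hγS _ hg, if_neg hne]
  have hdisj : Disjoint R (E.image t) := by
    rw [Finset.disjoint_right]
    intro z hz
    obtain ⟨e, he, rfl⟩ := Finset.mem_image.1 hz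
    exact htR e he
  have hsub : R ∪ E.image t ⊆ K := by
    refine Finset.union_subset hRK fun z hz => ?_
    obtain ⟨e, he, rfl⟩ := Finset.mem_image.1 hz
    exact (htK e he).1
  have htotal := sum_val hKpc
  have h2 : ∑ x ∈ R ∪ E.image t, ((val K x : ℤ) - 2) ≤ ∑ x ∈ K, ((val K x : ℤ) - 2) := by
    refine Finset.sum_le_sum_of_subset_of_nonneg hsub fun z hz hz' => ?_
    rw [Finset.mem_union, not_or] at hz'
    have := hleaf z hz hz'.1 hz'.2
    omega
  rw [Finset.sum_union hdisj, Finset.sum_image htinj, htotal] at h2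
  have h3 : ∑ e ∈ E, ((val (A e.1) e.2 : ℤ) - 2) ≤ ∑ e ∈ E, ((val K (t e) : ℤ) - 2) :=
    Finset.sum_le_sum fun e he => by have := (htK e he).2; omega
  rw [hEsum] at h3
  linarith

end

/-! ### Schreier transversals for the coset graph of a finite subtree -/

/-- The image of the finite tree `V` in the coset graph `S \ F`, with a spanning tree `B` and the
resulting Schreier generators. `I` lists the oriented edges of this image, each read off at the
representative in `B` of its origin; `NT` lists the positive edges outside the spanning tree. -/
structure Schreier [Fintype α] (S : Subgroup (FreeGroup α)) (V : Finset (FreeGroup α)) where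
  /-- the transversal -/
  B : Finset (FreeGroup α)
  /-- the oriented edges -/
  I : Finset (FreeGroup α × Letter α)
  /-- the positive edges outside the tree -/
  NT : Finset (FreeGroup α × Letter α)
  /-- the coset representative -/
  rep : FreeGroup α → FreeGroup α
  pcB : PC B
  inj : ∀ b ∈ B, ∀ b' ∈ B, b * b'⁻¹ ∈ S → b = b'
  sub : ∀ b ∈ B, ∃ x ∈ V, x * b⁻¹ ∈ S
  mem_I : ∀ p, p ∈ I ↔ p.1 ∈ B ∧ ∃ x ∈ V, x * ltr p.2 ∈ V ∧ x * p.1⁻¹ ∈ S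
  mem_NT : ∀ p, p ∈ NT ↔ p ∈ I ∧ p.2.2 = true ∧ p.1 * ltr p.2 ∉ B
  tree : ∀ b a, b ∈ B → b * ltr a ∈ B → (b, a) ∈ I
  rep_eq : ∀ y, ∀ b ∈ B, y * b⁻¹ ∈ S → rep y = b
  rep_mem : ∀ x ∈ V, rep x ∈ B ∧ x * (rep x)⁻¹ ∈ S

theorem pc_insert {B : Finset (FreeGroup α)} (hB : PC B) {b : FreeGroup α} {a : Letter α}
    (hb : b ∈ B) (hab : b * ltr a ∉ B) : PC (insert (b * ltr a) B) ∧
      ∀ c, b * ltr a * ltr c ∈ insert (b * ltr a) B → c = linv a := by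
  have hup : Pre b (b * ltr a) ∧ (b * ltr a).norm = b.norm + 1 := by
    rcases pre_mul_ltr b a with h | h
    · exact h
    · exact absurd (hB.2 _ _ h.1 hb) hab
  refine ⟨⟨Finset.mem_insert_of_mem hB.1, fun x u hx hu => ?_⟩, fun c hc => ?_⟩
  · rcases Finset.mem_insert.1 hu with rfl | hu
    · rcases Nat.lt_or_ge b.norm x.norm with h | h
      · have := hx.norm_le
        rw [hx.eq_of_norm (by omega)]; exact Finset.mem_insert_self _ _
      · exact Finset.mem_insert_of_mem (hB.2 _ _ (hx.total hup.1 h) hb)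
    · exact Finset.mem_insert_of_mem (hB.2 _ _ hx hu)
  · rcases Finset.mem_insert.1 hc with h | h
    · exact absurd (mul_eq_left.1 h) (ltr_ne_one c)
    · rcases pre_mul_ltr (b * ltr a) c with h2 | h2
      · exact absurd (hB.2 _ _ h2.1 h) hab
      · have h3 := (h2.1.total hup.1 (by omega)).eq_of_norm (by omega)
        rw [mul_assoc, mul_eq_left] at h3
        have h4 : ltr c = ltr (linv a) := by rw [ltr_linv]; exact eq_inv_of_mul_eq_one_right h3
        exact ltr_inj.1 h4

/-- A maximal finite tree `B` of coset representatives all of whose edges are readable in `V` meets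
every coset met by `V`. -/
theorem exists_transversal (S : Subgroup (FreeGroup α)) {V : Finset (FreeGroup α)} (hV : PC V) :
    ∃ B : Finset (FreeGroup α), PC B ∧ (∀ b ∈ B, ∀ b' ∈ B, b * b'⁻¹ ∈ S → b = b') ∧
      (∀ b ∈ B, ∃ x ∈ V, x * b⁻¹ ∈ S) ∧
      (∀ b a, b ∈ B → b * ltr a ∈ B → ∃ x ∈ V, x * ltr a ∈ V ∧ x * b⁻¹ ∈ S) ∧
      (∀ x ∈ V, ∃ b ∈ B, x * b⁻¹ ∈ S) := by
  classical
  let P : Finset (FreeGroup α) → Prop := fun B =>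
    PC B ∧ (∀ b ∈ B, ∀ b' ∈ B, b * b'⁻¹ ∈ S → b = b') ∧
      (∀ b ∈ B, ∃ x ∈ V, x * b⁻¹ ∈ S) ∧
      (∀ b a, b ∈ B → b * ltr a ∈ B → ∃ x ∈ V, x * ltr a ∈ V ∧ x * b⁻¹ ∈ S)
  have hbound : ∀ B, P B → B.card ≤ V.card := by
    rintro B ⟨_, h2, h3, _⟩
    choose! f hf hf' using h3
    refine Finset.card_le_card_of_injOn f (fun b hb => hf b hb) fun b hb b' hb' e => ?_
    refine h2 b hb b' hb' ?_
    have := S.mul_mem (S.inv_mem (hf' b hb)) (hf' b' hb')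
    rwa [e, mul_inv_rev, inv_inv, mul_assoc, inv_mul_cancel_left] at this
  have hP1 : P {1} := by
    refine ⟨⟨by simp, fun x u hx hu => ?_⟩, by simp, ?_, ?_⟩
    · rw [Finset.mem_singleton] at hu ⊢; subst hu; exact pre_one_iff.1 hx
    · intro b hb; rw [Finset.mem_singleton] at hb; subst hb
      exact ⟨1, hV.1, by simp [S.one_mem]⟩
    · intro b a hb hb'
      rw [Finset.mem_singleton] at hb hb'; subst hb
      exact absurd (by simpa using hb') (ltr_ne_one a)
  have hne : {k | ∃ B, P B ∧ B.card = k}.Nonempty := ⟨_, _, hP1, rfl⟩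
  have hbdd : BddAbove {k | ∃ B, P B ∧ B.card = k} :=
    ⟨V.card, by rintro k ⟨B, hB, rfl⟩; exact hbound B hB⟩
  obtain ⟨B, hB, hBk⟩ := Nat.sSup_mem hne hbdd
  have hmax : ∀ B', P B' → B'.card ≤ B.card := fun B' h => by
    rw [hBk]; exact le_csSup hbdd ⟨B', h, rfl⟩
  refine ⟨B, hB.1, hB.2.1, hB.2.2.1, hB.2.2.2, ?_⟩
  obtain ⟨h1, h2, h3, h4⟩ := hB
  have hind : ∀ m, ∀ x ∈ V, x.norm = m → ∃ b ∈ B, x * b⁻¹ ∈ S := by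
    intro m
    induction m with
    | zero =>
      intro x _ hx0
      rw [FreeGroup.norm_eq_zero] at hx0; subst hx0
      exact ⟨1, h1.1, by simp [S.one_mem]⟩
    | succ m ih =>
      intro x hx hxm
      by_contra hcov
      push Not at hcov
      obtain ⟨y, a, rfl, hy, hyn⟩ := exists_last (u := x) (by rintro rfl; simp at hxm)
      have hyV := hV.2 _ _ hy hx
      obtain ⟨b, hb, hyb⟩ := ih y hyV (by omega)
      have hS : y * ltr a * (b * ltr a)⁻¹ ∈ S := by
        rwa [mul_inv_rev, mul_assoc, mul_inv_cancel_left]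
      have hab : b * ltr a ∉ B := fun h => hcov _ h hS
      obtain ⟨hpc, hnb⟩ := pc_insert h1 hb hab
      have hnew : ∀ c ∈ B, c * (b * ltr a)⁻¹ ∉ S := fun c hc h => by
        refine hcov c hc ?_
        have := S.mul_mem hS (S.inv_mem h)
        rwa [mul_inv_rev c, inv_inv, mul_assoc, inv_mul_cancel_left] at this
      have hP' : P (insert (b * ltr a) B) := by
        refine ⟨hpc, ?_, ?_, ?_⟩
        · intro c hc c' hc' h
          rcases Finset.mem_insert.1 hc with rfl | hc <;>
          rcases Finset.mem_insert.1 hc' with rfl | hc'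
          · rfl
          · refine absurd ?_ (hnew c' hc')
            have := S.inv_mem h
            rwa [mul_inv_rev, inv_inv] at this
          · exact absurd h (hnew c hc)
          · exact h2 c hc c' hc' h
        · intro c hc
          rcases Finset.mem_insert.1 hc with rfl | hc
          · exact ⟨_, hx, hS⟩
          · exact h3 c hc
        · intro c d hc hd
          rcases Finset.mem_insert.1 hc with rfl | hc
          · obtain rfl := hnb d hd
            exact ⟨_, hx, by rwa [ltr_linv, mul_inv_cancel_right], hS⟩
          · rcases Finset.mem_insert.1 hd with hd | hd
            · have hcd : c = b * ltr a * ltr (linv d) := by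
                rw [← hd, ltr_linv, mul_inv_cancel_right]
              have := hnb (linv d) (by rw [← hcd]; exact Finset.mem_insert_of_mem hc)
              rw [linv_inj] at this; subst this
              obtain rfl := mul_right_cancel hd
              exact ⟨y, hyV, hx, hyb⟩
            · exact h4 c d hc hd
      have := hmax _ hP'
      rw [Finset.card_insert_of_notMem hab] at this
      omega
  exact fun x hx => hind _ x hx rfl

section
variable [Fintype α]

open Classical in
theorem exists_schreier (S : Subgroup (FreeGroup α)) {V : Finset (FreeGroup α)} (hV : PC V) :
    Nonempty (Schreier S V) := by
  obtain ⟨B, h1, h2, h3, h4, h5⟩ := exists_transversal S hV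
  let I : Finset (FreeGroup α × Letter α) := (B ×ˢ Finset.univ).filter fun p =>
    ∃ x ∈ V, x * ltr p.2 ∈ V ∧ x * p.1⁻¹ ∈ S
  let rep : FreeGroup α → FreeGroup α := fun y =>
    if h : ∃ b ∈ B, y * b⁻¹ ∈ S then h.choose else 1
  have hrep : ∀ y, ∀ b ∈ B, y * b⁻¹ ∈ S → rep y = b := by
    intro y b hb hy
    have h : ∃ b ∈ B, y * b⁻¹ ∈ S := ⟨b, hb, hy⟩
    simp only [rep, dif_pos h]
    obtain ⟨h6, h7⟩ := h.choose_spec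
    refine h2 _ h6 _ hb ?_
    have := S.mul_mem (S.inv_mem h7) hy
    rwa [mul_inv_rev, inv_inv, mul_assoc, inv_mul_cancel_left] at this
  exact ⟨{
    B := B
    I := I
    NT := I.filter fun p => p.2.2 = true ∧ p.1 * ltr p.2 ∉ B
    rep := rep
    pcB := h1
    inj := h2
    sub := h3
    mem_I := fun p => by simp [I]
    mem_NT := fun p => by simp
    tree := fun b a hb hb' => by
      simp only [I, Finset.mem_filter, Finset.mem_product, Finset.mem_univ, and_true]
      exact ⟨hb, h4 b a hb hb'⟩
    rep_eq := hrep
    rep_mem := fun x hx => by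
      obtain ⟨b, hb, hxb⟩ := h5 x hx
      rw [hrep x b hb hxb]; exact ⟨hb, hxb⟩ }⟩

namespace Schreier
variable {S : Subgroup (FreeGroup α)} {V : Finset (FreeGroup α)} (D : Schreier S V)

/-- The Schreier generator attached to an oriented edge. -/
def σ (p : FreeGroup α × Letter α) : FreeGroup α :=
  p.1 * ltr p.2 * (D.rep (p.1 * ltr p.2))⁻¹

/-- Reversal of an oriented edge. -/
def ι (p : FreeGroup α × Letter α) : FreeGroup α × Letter α :=
  (D.rep (p.1 * ltr p.2), linv p.2)

theorem rep_of_B {b : FreeGroup α} (hb : b ∈ D.B) : D.rep b = b :=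
  D.rep_eq b b hb (by simp [S.one_mem])

theorem rep_mul {p : FreeGroup α × Letter α} {x : FreeGroup α} (hx : x * ltr p.2 ∈ V)
    (hxp : x * p.1⁻¹ ∈ S) : D.rep (p.1 * ltr p.2) = D.rep (x * ltr p.2) ∧ D.σ p ∈ S := by
  obtain ⟨h1, h2⟩ := D.rep_mem _ hx
  have h3 : p.1 * ltr p.2 * (D.rep (x * ltr p.2))⁻¹ ∈ S := by
    have := S.mul_mem (S.inv_mem hxp) h2
    rwa [show (x * p.1⁻¹)⁻¹ * (x * ltr p.2 * (D.rep (x * ltr p.2))⁻¹) =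
      p.1 * ltr p.2 * (D.rep (x * ltr p.2))⁻¹ by group] at this
  have h4 := D.rep_eq _ _ h1 h3
  exact ⟨h4, by rw [σ, h4]; exact h3⟩

theorem rep_I {p : FreeGroup α × Letter α} (hp : p ∈ D.I) :
    D.rep (p.1 * ltr p.2) ∈ D.B ∧ D.σ p ∈ S := by
  obtain ⟨hb, x, hx, hxa, hxp⟩ := (D.mem_I p).1 hp
  obtain ⟨h1, h2⟩ := D.rep_mul hxa hxp
  exact ⟨by rw [h1]; exact (D.rep_mem _ hxa).1, h2⟩

theorem ι_I {p : FreeGroup α × Letter α} (hp : p ∈ D.I) :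
    D.ι p ∈ D.I ∧ D.rep ((D.ι p).1 * ltr (D.ι p).2) = p.1 := by
  obtain ⟨hb, x, hx, hxa, hxp⟩ := (D.mem_I p).1 hp
  obtain ⟨h1, h2⟩ := D.rep_mul hxa hxp
  obtain ⟨h3, h4⟩ := D.rep_mem _ hxa
  refine ⟨(D.mem_I _).2 ⟨by rw [ι, h1]; exact h3, x * ltr p.2, hxa, ?_, ?_⟩, ?_⟩
  · simp only [ι]; rwa [ltr_linv, mul_inv_cancel_right]
  · simp only [ι]; rw [h1]; exact h4
  · refine D.rep_eq _ _ hb ?_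
    have := S.inv_mem h2
    rw [σ] at this
    simp only [ι]
    rwa [mul_inv_rev, mul_inv_rev, inv_inv, ← ltr_linv, ← mul_assoc] at this

theorem ι_ι {p : FreeGroup α × Letter α} (hp : p ∈ D.I) : D.ι (D.ι p) = p := by
  have h := (D.ι_I hp).2
  rw [ι, h]; simp [ι, linv_linv]

theorem ι_tree {p : FreeGroup α × Letter α} (hp : p ∈ D.I)
    (h : (D.ι p).1 * ltr (D.ι p).2 ∈ D.B) : p.1 * ltr p.2 ∈ D.B := by
  have h1 := (D.ι_I hp).2
  rw [D.rep_of_B h] at h1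
  have h2 : p.1 * ltr p.2 = (D.ι p).1 := by
    rw [← h1]; simp [ι, ltr_linv]
  rw [h2]; exact ((D.mem_I _).1 (D.ι_I hp).1).1

theorem σ_ι {p : FreeGroup α × Letter α} (hp : p ∈ D.I) : D.σ (D.ι p) = (D.σ p)⁻¹ := by
  rw [σ, (D.ι_I hp).2]; simp [ι, σ, ltr_linv, mul_assoc]

open Classical in
theorem card_I : 2 * D.B.card + 2 * D.NT.card ≤ D.I.card + 2 := by
  let TP := (D.B ×ˢ (Finset.univ : Finset (Letter α))).filter fun p => p.1 * ltr p.2 ∈ D.B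
  have hTP : (TP.card : ℤ) = 2 * D.B.card - 2 := by
    have h := sum_val D.pcB
    have e1 : ∑ x ∈ D.B, val D.B x = TP.card := by
      rw [Finset.card_filter, Finset.sum_product]
      refine Finset.sum_congr rfl fun x _ => ?_
      rw [val, Finset.card_filter]
    rw [Finset.sum_sub_distrib, ← Nat.cast_sum, e1] at h
    simp at h
    linarith
  have hinj : Set.InjOn D.ι (D.NT : Set (FreeGroup α × Letter α)) := fun p hp q hq h => by
    rw [← D.ι_ι ((D.mem_NT p).1 hp).1, ← D.ι_ι ((D.mem_NT q).1 hq).1, h]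
  have hd1 : Disjoint TP (D.NT ∪ D.NT.image D.ι) := by
    rw [Finset.disjoint_left]
    intro p hp hp'
    have hpB := (Finset.mem_filter.1 hp).2
    rcases Finset.mem_union.1 hp' with h | h
    · exact ((D.mem_NT p).1 h).2.2 hpB
    · obtain ⟨q, hq, rfl⟩ := Finset.mem_image.1 h
      have hq' := (D.mem_NT q).1 hq
      exact hq'.2.2 (D.ι_tree hq'.1 hpB)
  have hd2 : Disjoint D.NT (D.NT.image D.ι) := by
    rw [Finset.disjoint_left]
    intro p hp hp'
    obtain ⟨q, hq, rfl⟩ := Finset.mem_image.1 hp'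
    have h1 := ((D.mem_NT _).1 hp).2.1
    have h2 := ((D.mem_NT _).1 hq).2.1
    simp [ι, linv, h2] at h1
  have hsub : TP ∪ (D.NT ∪ D.NT.image D.ι) ⊆ D.I := by
    intro p hp
    rcases Finset.mem_union.1 hp with h | h
    · obtain ⟨h1, h2⟩ := Finset.mem_filter.1 h
      exact D.tree _ _ (Finset.mem_product.1 h1).1 h2
    · rcases Finset.mem_union.1 h with h | h
      · exact ((D.mem_NT p).1 h).1
      · obtain ⟨q, hq, rfl⟩ := Finset.mem_image.1 h
        exact (D.ι_I ((D.mem_NT q).1 hq).1).1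
  have hcard := Finset.card_le_card hsub
  rw [Finset.card_union_of_disjoint hd1, Finset.card_union_of_disjoint hd2,
    Finset.card_image_of_injOn hinj] at hcard
  omega

theorem σ_mem_closure {p : FreeGroup α × Letter α} (hp : p ∈ D.I) :
    D.σ p ∈ Subgroup.closure (D.σ '' (D.NT : Set (FreeGroup α × Letter α))) := by
  by_cases hB : p.1 * ltr p.2 ∈ D.B
  · rw [σ, D.rep_of_B hB, mul_inv_cancel]; exact Subgroup.one_mem _
  · by_cases hs : p.2.2 = true
    · exact Subgroup.subset_closure ⟨p, (D.mem_NT p).2 ⟨hp, hs, hB⟩, rfl⟩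
    · have hι : D.ι p ∈ D.NT := (D.mem_NT _).2 ⟨(D.ι_I hp).1, by simpa [ι, linv] using hs,
        fun h => hB (D.ι_tree hp h)⟩
      have := Subgroup.inv_mem _ (Subgroup.subset_closure (k := D.σ '' (D.NT : Set _))
        ⟨_, hι, rfl⟩)
      rwa [D.σ_ι hp, inv_inv] at this

/-- The Schreier generators generate every element of `S` that is readable in `V`. -/
theorem mem_closure (hV : PC V) {t : FreeGroup α} (ht : t ∈ V) (htS : t ∈ S) :
    t ∈ Subgroup.closure (D.σ '' (D.NT : Set (FreeGroup α × Letter α))) := by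
  have h1 : D.rep 1 = 1 := D.rep_of_B D.pcB.1
  have key : ∀ m, ∀ x ∈ V, x.norm = m →
      x * (D.rep x)⁻¹ ∈ Subgroup.closure (D.σ '' (D.NT : Set (FreeGroup α × Letter α))) := by
    intro m
    induction m with
    | zero =>
      intro x _ hx
      rw [FreeGroup.norm_eq_zero] at hx; subst hx
      simp [h1]
    | succ m ih =>
      intro x hx hxm
      obtain ⟨y, a, rfl, hy, hyn⟩ := exists_last (u := x) (by rintro rfl; simp at hxm)
      have hyV := hV.2 _ _ hy hx
      obtain ⟨h2, h3⟩ := D.rep_mem y hyV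
      have hI : (D.rep y, a) ∈ D.I := (D.mem_I _).2 ⟨h2, y, hyV, hx, h3⟩
      have h4 := (D.rep_mul (p := (D.rep y, a)) hx h3).1
      have := Subgroup.mul_mem _ (ih y hyV (by omega)) (D.σ_mem_closure hI)
      rw [σ, h4] at this
      simpa [mul_assoc] using this
  have h2 : D.rep t = 1 := D.rep_eq t 1 D.pcB.1 (by simpa using htS)
  simpa [h2] using key _ t ht rfl

end Schreier

end

/-! ### Periodic elements and the fundamental estimate -/

/-- `P k` holds for every positive multiple `k` of some fixed positive number. -/
def Ev (P : ℕ → Prop) : Prop := ∃ N > 0, ∀ k > 0, N ∣ k → P k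

theorem Ev.and {P Q : ℕ → Prop} (hP : Ev P) (hQ : Ev Q) : Ev fun k => P k ∧ Q k := by
  obtain ⟨N, hN, h⟩ := hP
  obtain ⟨M, hM, h'⟩ := hQ
  exact ⟨N * M, Nat.mul_pos hN hM, fun k hk hd =>
    ⟨h k hk (dvd_of_mul_right_dvd hd), h' k hk (dvd_of_mul_left_dvd hd)⟩⟩

theorem Ev.mono {P Q : ℕ → Prop} (hP : Ev P) (h : ∀ k, P k → Q k) : Ev Q := by
  obtain ⟨N, hN, h'⟩ := hP
  exact ⟨N, hN, fun k hk hd => h k (h' k hk hd)⟩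

theorem Ev.of_forall {P : ℕ → Prop} (h : ∀ k, P k) : Ev P := ⟨1, one_pos, fun k _ _ => h k⟩

theorem Ev.of_ge {P : ℕ → Prop} {N : ℕ} (h : ∀ k ≥ N, P k) : Ev P :=
  ⟨N + 1, Nat.succ_pos N, fun k hk hd => h k (by have := Nat.le_of_dvd hk hd; omega)⟩

theorem Ev.finset {β : Type*} {s : Finset β} {P : β → ℕ → Prop} (h : ∀ x ∈ s, Ev (P x)) :
    Ev fun k => ∀ x ∈ s, P x k := by
  classical
  induction s using Finset.induction_on with
  | empty => exact Ev.of_forall fun k x hx => absurd hx (Finset.notMem_empty x)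
  | insert a s _ ih =>
    refine ((h a (Finset.mem_insert_self a s)).and
      (ih fun x hx => h x (Finset.mem_insert_of_mem hx))).mono fun k hk x hx => ?_
    rcases Finset.mem_insert.1 hx with rfl | hx
    · exact hk.1
    · exact hk.2 x hx

theorem Ev.exists {P : ℕ → Prop} (h : Ev P) : ∃ k > 0, P k := by
  obtain ⟨N, hN, h⟩ := h
  exact ⟨N, hN, h N hN dvd_rfl⟩

/-- The iterates of an endomorphism, as homomorphisms. -/
def iter {G : Type*} [Group G] (φ : G →* G) (k : ℕ) : G →* G where
  toFun := φ^[k]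
  map_one' := iterate_map_one φ k
  map_mul' := iterate_map_mul φ k

theorem iter_apply {G : Type*} [Group G] (φ : G →* G) (k : ℕ) (g : G) : iter φ k g = φ^[k] g :=
  rfl

theorem iter_add {G : Type*} [Group G] (φ : G →* G) (k l : ℕ) (g : G) :
    iter φ (k + l) g = iter φ k (iter φ l g) := Function.iterate_add_apply φ k l g

theorem iter_injective {G : Type*} [Group G] {φ : G →* G} (h : Function.Injective φ) (k : ℕ) :
    Function.Injective (iter φ k) := h.iterate k

theorem iter_eq_of_dvd {G : Type*} [Group G] {φ : G →* G} {N k : ℕ} {g : G}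
    (h : iter φ N g = g) (hd : N ∣ k) : iter φ k g = g :=
  Function.IsPeriodicPt.trans_dvd (f := φ) (m := N) h hd

/-- The subgroup of periodic elements. -/
def Per {G : Type*} [Group G] (φ : G →* G) : Subgroup G where
  carrier := {g | Ev fun k => iter φ k g = g}
  one_mem' := Ev.of_forall fun k => map_one _
  mul_mem' := fun ha hb => (ha.and hb).mono fun k h => by rw [map_mul, h.1, h.2]
  inv_mem' := fun ha => ha.mono fun k h => by rw [map_inv, h]

theorem mem_Per {G : Type*} [Group G] {φ : G →* G} {g : G} :
    g ∈ Per φ ↔ Ev fun k => iter φ k g = g := Iff.rfl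

theorem mem_Per_of {G : Type*} [Group G] {φ : G →* G} {g : G} {N : ℕ} (hN : 0 < N)
    (h : iter φ N g = g) : g ∈ Per φ := ⟨N, hN, fun _ _ hd => iter_eq_of_dvd h hd⟩

/-- The orbit of a non-periodic element leaves every finite set. -/
theorem ev_notMem {G : Type*} [Group G] {φ : G →* G} (hφ : Function.Injective φ) {g : G}
    (hg : g ∉ Per φ) (M : Set G) (hM : M.Finite) : ∃ N, ∀ k ≥ N, iter φ k g ∉ M := by
  have hlt : ∀ k l, k < l → iter φ k g ≠ iter φ l g := by
    intro k l hkl h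
    obtain ⟨d, rfl⟩ := Nat.exists_eq_add_of_lt hkl
    rw [add_assoc, iter_add] at h
    exact hg (mem_Per_of (Nat.succ_pos d) (iter_injective hφ k h).symm)
  have hinj : Function.Injective fun k => iter φ k g := by
    intro k l h
    rcases lt_trichotomy k l with h' | h' | h'
    · exact absurd h (hlt _ _ h')
    · exact h'
    · exact absurd h.symm (hlt _ _ h')
  have hfin : {k | iter φ k g ∈ M}.Finite := hM.preimage hinj.injOn
  obtain ⟨N, hN⟩ := hfin.bddAbove
  exact ⟨N + 1, fun k hk h => by have := hN h; omega⟩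

/-- `x` is a prefix of suitable high iterates of some element. -/
def Good (φ : FreeGroup α →* FreeGroup α) (x : FreeGroup α) : Prop :=
  ∃ g, Ev fun k => Pre x (iter φ k g)

/-- A suffix closed finite set containing `1`, the basis and a given finite set. -/
theorem exists_suffix_closed [Fintype α] (Q : Finset (FreeGroup α)) :
    ∃ S : Finset (FreeGroup α), Q ⊆ S ∧ 1 ∈ S ∧ (∀ i, FreeGroup.of i ∈ S) ∧
      ∀ a g, ltr a * g ∈ S → (ltr a * g).norm = g.norm + 1 → g ∈ S := by
  let Q' := Q ∪ insert 1 (Finset.univ.image FreeGroup.of)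
  have hmem : ∀ g, g ∈ (pcl (Q'.image fun g => g⁻¹)).image (fun g => g⁻¹) ↔
      ∃ u ∈ Q', Pre g⁻¹ u⁻¹ := by
    intro g
    constructor
    · intro h
      obtain ⟨x, hx, rfl⟩ := Finset.mem_image.1 h
      obtain ⟨u, hu, hp⟩ := mem_pcl.1 hx
      obtain ⟨v, hv, rfl⟩ := Finset.mem_image.1 hu
      exact ⟨v, hv, by rwa [inv_inv]⟩
    · rintro ⟨u, hu, hp⟩
      exact Finset.mem_image.2 ⟨g⁻¹, mem_pcl.2 ⟨u⁻¹, Finset.mem_image_of_mem _ hu, hp⟩,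
        inv_inv g⟩
  refine ⟨(pcl (Q'.image fun g => g⁻¹)).image (fun g => g⁻¹), ?_, ?_, ?_, ?_⟩
  · exact fun g hg => (hmem g).2 ⟨g, Finset.mem_union_left _ hg, pre_refl _⟩
  · exact (hmem 1).2 ⟨1, by simp [Q'], pre_refl _⟩
  · exact fun i => (hmem _).2 ⟨FreeGroup.of i, by simp [Q'], pre_refl _⟩
  · intro a g hag hn
    obtain ⟨u, hu, hp⟩ := (hmem _).1 hag
    refine (hmem _).2 ⟨u, hu, Pre.trans ?_ hp⟩
    have h1 : Pre (ltr a) (ltr a * g) := by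
      rw [pre_iff, norm_ltr, inv_mul_cancel_left, hn, add_comm]
    have := h1.inv
    rw [mul_inv_rev, mul_assoc, inv_mul_cancel, mul_one] at this
    rwa [mul_inv_rev]

/-- The translate of a good point by a periodic element lies in the hull of the images of a finite set
under suitable iterates. -/
theorem ev_hull {φ : FreeGroup α →* FreeGroup α} {s x : FreeGroup α} (hs : s ∈ Per φ)
    (hx : Good φ x) : ∃ Q : Finset (FreeGroup α), Ev fun k => s * x ∈ pcl (Q.image (iter φ k)) := by
  obtain ⟨g, hg⟩ := hx
  refine ⟨{s, s * g}, ((mem_Per.1 hs).and hg).mono fun k ⟨h1, h2⟩ => ?_⟩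
  rcases h2.mul_left s with h | h
  · exact mem_pcl.2 ⟨s, Finset.mem_image.2 ⟨s, by simp, h1⟩, h⟩
  · exact mem_pcl.2 ⟨s * iter φ k g, Finset.mem_image.2 ⟨s * g, by simp, by rw [map_mul, h1]⟩, h⟩

section
variable [Fintype α]

open Classical in
/-- The fundamental estimate. The edges of the coset graph `Per φ \ F` readable in a finite tree `V`
of good elements, together with the distinct pendant edges `E`, are all visible in the hull of
`φ^k(S)` for a suitable `S` and suitable large `k`, whereas the key inequality bounds the number of
directions visible there. -/
theorem fundamental {φ : FreeGroup α →* FreeGroup α} (hφ : Function.Injective φ)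
    {V : Finset (FreeGroup α)} (hV : PC V) (hgood : ∀ x ∈ V, Good φ x)
    (E : Finset (FreeGroup α × Letter α))
    (hE : ∀ e ∈ E, e.1 ∈ V ∧ Good φ (e.1 * ltr e.2) ∧ ∀ x ∈ V, x * (e.1 * ltr e.2)⁻¹ ∉ Per φ)
    (hEinj : ∀ e ∈ E, ∀ e' ∈ E, e.1 * ltr e.2 * (e'.1 * ltr e'.2)⁻¹ ∈ Per φ → e = e') :
    ∃ J : Finset (FreeGroup α), (∀ j ∈ J, j ∈ Per φ) ∧
      (∀ t ∈ V, t ∈ Per φ → t ∈ Subgroup.closure (J : Set (FreeGroup α))) ∧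
      2 * J.card + E.card ≤ 2 * Fintype.card α := by
  obtain ⟨D⟩ := exists_schreier (Per φ) hV
  let f : FreeGroup α × Letter α → FreeGroup α × Letter α := fun e => (D.rep e.1, e.2)
  let U := D.I ∪ E.image f
  have hdisj : Disjoint D.I (E.image f) := by
    rw [Finset.disjoint_right]
    intro p hp hpI
    obtain ⟨e, he, rfl⟩ := Finset.mem_image.1 hp
    obtain ⟨h1, x, hx, hxa, hxp⟩ := (D.mem_I _).1 hpI
    obtain ⟨h2, _, h3⟩ := hE e he
    refine h3 _ hxa ?_
    have := (Per φ).mul_mem hxp ((Per φ).inv_mem (D.rep_mem _ h2).2)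
    simp only [f] at this ⊢
    rwa [show x * (D.rep e.1)⁻¹ * (e.1 * (D.rep e.1)⁻¹)⁻¹ =
      x * ltr e.2 * (e.1 * ltr e.2)⁻¹ by group] at this
  have hfinj : Set.InjOn f (E : Set (FreeGroup α × Letter α)) := by
    intro e he e' he' h
    have h1 := (D.rep_mem _ (hE e he).1).2
    have h2 := (D.rep_mem _ (hE e' he').1).2
    have h3 : D.rep e.1 = D.rep e'.1 := (Prod.ext_iff.1 h).1
    have h4 : e.2 = e'.2 := (Prod.ext_iff.1 h).2
    refine hEinj e he e' he' ?_
    have := (Per φ).mul_mem h1 ((Per φ).inv_mem h2)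
    rw [h3] at this
    rw [h4]
    rwa [show e.1 * (D.rep e'.1)⁻¹ * (e'.1 * (D.rep e'.1)⁻¹)⁻¹ =
      e.1 * ltr e'.2 * (e'.1 * ltr e'.2)⁻¹ by group] at this
  have hUcard : U.card = D.I.card + E.card := by
    rw [Finset.card_union_of_disjoint hdisj, Finset.card_image_of_injOn hfinj]
  -- the points that must be visible in the hull
  let pts := D.B ∪ U.image fun p => p.1 * ltr p.2
  have hpts : ∀ p ∈ pts, ∃ Q : Finset (FreeGroup α),
      Ev fun k => p ∈ pcl (Q.image (iter φ k)) := by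
    have hsplit : ∀ p x, x * p⁻¹ ∈ Per φ → Good φ x → ∃ Q : Finset (FreeGroup α),
        Ev fun k => p ∈ pcl (Q.image (iter φ k)) := by
      intro p x h hx
      have h2 := (Per φ).inv_mem h
      have := ev_hull h2 hx
      rwa [mul_inv_rev, inv_inv, inv_mul_cancel_right] at this
    intro p hp
    rcases Finset.mem_union.1 hp with hp | hp
    · obtain ⟨x, hx, hxp⟩ := D.sub p hp
      exact hsplit p x hxp (hgood x hx)
    · obtain ⟨q, hq, rfl⟩ := Finset.mem_image.1 hp
      rcases Finset.mem_union.1 hq with hq | hq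
      · obtain ⟨h1, x, hx, hxa, hxp⟩ := (D.mem_I _).1 hq
        refine hsplit _ _ ?_ (hgood _ hxa)
        rwa [mul_inv_rev, mul_assoc, mul_inv_cancel_left]
      · obtain ⟨e, he, rfl⟩ := Finset.mem_image.1 hq
        obtain ⟨h2, h3, _⟩ := hE e he
        refine hsplit _ (e.1 * ltr e.2) ?_ h3
        simp only [f]
        rw [mul_inv_rev, mul_assoc, mul_inv_cancel_left]
        exact (D.rep_mem _ h2).2
  choose! Q hQ using hpts
  obtain ⟨S, hQS, h1, hof, hsuf⟩ := exists_suffix_closed (pts.biUnion Q)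
  have hvis : Ev fun k => ∀ p ∈ pts, p ∈ pcl (S.image (iter φ k)) :=
    Ev.finset fun p hp => (hQ p hp).mono fun k hk =>
      pcl_mono (Finset.image_subset_image
        ((Finset.subset_biUnion_of_mem Q hp).trans hQS)) hk
  -- short elements are fixed or move points of `B` outside `B`
  let T := (finite_norm_le (α := α) (Fintype.card α * (3 * S.card))).toFinset
  let M := (D.B ×ˢ D.B).image fun p => p.2 * p.1⁻¹
  have hshort : Ev fun k => ∀ g ∈ T, iter φ k g = g ∨ iter φ k g ∉ M := by
    refine Ev.finset fun g _ => ?_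
    by_cases hg : g ∈ Per φ
    · exact (mem_Per.1 hg).mono fun k h => Or.inl h
    · obtain ⟨N, hN⟩ := ev_notMem hφ hg (M : Set (FreeGroup α)) M.finite_toSet
      exact Ev.of_ge fun k hk => Or.inr fun h => hN k hk h
  obtain ⟨k, hk0, hvis, hshort⟩ := (hvis.and hshort).exists
  have hkey := key_inequality (iter φ k) (iter_injective hφ k) S h1 hof hsuf D.B D.pcB.1
    (fun b hb => hvis b (Finset.mem_union_left _ hb)) (by
      intro b hb b' hb' g hg h
      have hM : iter φ k g ∈ M :=
        Finset.mem_image.2 ⟨(b, b'), Finset.mem_product.2 ⟨hb, hb'⟩, by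
          simp only; rw [← h, mul_inv_cancel_right]⟩
      have hfix := (hshort g (by simpa [T] using hg)).resolve_right (not_not.2 hM)
      refine (D.inj b' hb' b hb ?_).symm
      rw [← h, mul_inv_cancel_right, hfix]
      exact mem_Per_of hk0 hfix)
  set K := pcl (S.image (iter φ k)) with hK
  have hUle : U.card ≤ ∑ b ∈ D.B, val K b := by
    have e1 : ∑ x ∈ D.B, val K x =
        ((D.B ×ˢ (Finset.univ : Finset (Letter α))).filter fun p => p.1 * ltr p.2 ∈ K).card := by
      rw [Finset.card_filter, Finset.sum_product]
      refine Finset.sum_congr rfl fun x _ => ?_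
      rw [val, Finset.card_filter]
    rw [e1]
    refine Finset.card_le_card fun p hp => ?_
    simp only [Finset.mem_filter, Finset.mem_product, Finset.mem_univ, and_true]
    refine ⟨?_, hvis _ (Finset.mem_union_right _ (Finset.mem_image_of_mem _ hp))⟩
    rcases Finset.mem_union.1 hp with hq | hq
    · exact ((D.mem_I _).1 hq).1
    · obtain ⟨e, he, rfl⟩ := Finset.mem_image.1 hq
      exact (D.rep_mem _ (hE e he).1).1
  refine ⟨D.NT.image D.σ, ?_, ?_, ?_⟩
  · intro j hj
    obtain ⟨p, hp, rfl⟩ := Finset.mem_image.1 hj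
    exact (D.rep_I ((D.mem_NT p).1 hp).1).2
  · intro t ht htP
    rw [Finset.coe_image]
    exact D.mem_closure hV ht htP
  · have hc := D.card_I
    have hJ : (D.NT.image D.σ).card ≤ D.NT.card := Finset.card_image_le
    rw [Finset.sum_sub_distrib, ← Nat.cast_sum] at hkey
    simp only [Finset.sum_const, nsmul_eq_mul] at hkey
    omega

end

/-! ### Bounded cancellation -/

theorem exists_lipschitz [Fintype α] (φ : FreeGroup α →* FreeGroup α) :
    ∃ c : ℕ, ∀ g, (φ g).norm ≤ c * g.norm := by
  have hl : ∀ a : Letter α, (φ (ltr a)).norm ≤ ∑ i, (φ (FreeGroup.of i)).norm := by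
    rintro ⟨i, s⟩
    have h1 := Finset.single_le_sum (f := fun i => (φ (FreeGroup.of i)).norm)
      (fun j _ => Nat.zero_le _) (Finset.mem_univ i)
    cases s with
    | true => exact h1
    | false =>
      have hi : ltr (i, false) = (FreeGroup.of i)⁻¹ := by rw [← ltr_true, ltr_inv]; rfl
      rw [hi, map_inv, FreeGroup.norm_inv_eq]; exact h1
  refine ⟨∑ i, (φ (FreeGroup.of i)).norm, fun g => ?_⟩
  generalize hm : g.norm = m
  induction m generalizing g with
  | zero => rw [FreeGroup.norm_eq_zero] at hm; subst hm; simp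
  | succ m ih =>
    obtain ⟨x, a, rfl, _, hn⟩ := exists_last (u := g) (by rintro rfl; simp at hm)
    have h1 := FreeGroup.norm_mul_le (φ x) (φ (ltr a))
    have h2 := ih x (by omega)
    have h3 := hl a
    rw [map_mul, mul_add_one]
    omega

/-- A property true at `p` and false at an extension `u` changes along some edge between them. -/
theorem exists_crossing (Q : FreeGroup α → Prop) {p u : FreeGroup α} (hpu : Pre p u) (hp : Q p)
    (hu : ¬ Q u) : ∃ y a, Pre p y ∧ Pre (y * ltr a) u ∧ Pre y u ∧ Q y ∧ ¬ Q (y * ltr a) := by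
  generalize hm : u.norm - p.norm = m
  induction m generalizing p with
  | zero =>
    have := hpu.norm_le
    have := hpu.eq_of_norm (by omega)
    subst this; exact absurd hp hu
  | succ m ih =>
    obtain ⟨a, ha, hn⟩ := hpu.next (by rintro rfl; exact hu hp)
    by_cases hQ : Q (p * ltr a)
    · obtain ⟨y, b, h1, h2⟩ := ih ha hQ (by omega)
      exact ⟨y, b, (hpu.total ha (by omega)).trans h1, h2⟩
    · exact ⟨p, a, pre_refl p, ha, hpu, hp, hQ⟩

/-- If `z` separates `y` from both `1` and `y'`, then `z` is within the distance of `y` and `y'`. -/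
theorem dist_le_of_cross {z y y' : FreeGroup α} (h : Pre z y) (h' : ¬ Pre z y') :
    (z⁻¹ * y).norm ≤ (y'⁻¹ * y).norm := by
  rcases h.mul_left y'⁻¹ with h1 | h1
  · have := h1.inv
    rw [inv_inv, mul_inv_cancel_left] at this
    exact absurd this h'
  · rw [pre_iff] at h1
    rw [show (y'⁻¹ * z)⁻¹ * (y'⁻¹ * y) = z⁻¹ * y by group] at h1
    omega

/-- If `φ(p)` starts with `z` and continues for at least `C` more letters, then `φ(u)` starts with `z`
for every extension `u` of `p`. Otherwise the images of the prefixes of `u` cross the tip of `z` once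
before and once after `p`; injectivity bounds the distance of the two crossings, and with it the
distance of `φ(p)` from the tip. -/
theorem bounded_cancellation [Fintype α] {φ : FreeGroup α →* FreeGroup α}
    (hφ : Function.Injective φ) :
    ∃ C : ℕ, ∀ p u z, Pre p u → Pre z (φ p) → z.norm + C ≤ (φ p).norm → Pre z (φ u) := by
  obtain ⟨c, hc⟩ := exists_lipschitz φ
  have hfin : {g : FreeGroup α | (φ g).norm ≤ 2 * c}.Finite :=
    (finite_norm_le (α := α) (2 * c)).preimage hφ.injOn
  obtain ⟨M, hM⟩ := (hfin.image FreeGroup.norm).bddAbove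
  have hM' : ∀ g : FreeGroup α, (φ g).norm ≤ 2 * c → g.norm ≤ M := fun g hg =>
    hM ⟨g, hg, rfl⟩
  refine ⟨c * (1 + M) + 1, fun p u z hpu hz hzn => ?_⟩
  by_contra hzu
  obtain ⟨y, a, h1, h2, h2', h3, h4⟩ := exists_crossing (fun x => Pre z (φ x)) hpu hz hzu
  have hz1 : ¬ Pre z (φ 1) := by
    rw [map_one, pre_one_iff]; rintro rfl; exact hzu (pre_one _)
  obtain ⟨x, b, _, k2, k2', k3, k4⟩ := exists_crossing (fun x => ¬ Pre z (φ x)) (pre_one p) hz1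
    (not_not.2 hz)
  rw [not_not] at k4
  have hstep : ∀ (x : FreeGroup α) (a : Letter α), (φ (x * ltr a))⁻¹ * φ x = φ (ltr a)⁻¹ := by
    intro x a; rw [← map_inv, ← map_mul]; congr 1; group
  have hlet : ∀ a : Letter α, (φ (ltr a)⁻¹).norm ≤ c := fun a => by
    have := hc (ltr a)⁻¹
    rwa [FreeGroup.norm_inv_eq, norm_ltr, mul_one] at this
  have d1 : (z⁻¹ * φ y).norm ≤ c := by
    have := dist_le_of_cross h3 h4
    rw [hstep] at this
    exact this.trans (hlet a)
  have d2 : (z⁻¹ * φ (x * ltr b)).norm ≤ c := by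
    have := dist_le_of_cross k4 k3
    rw [dist_comm (φ x), hstep] at this
    exact this.trans (hlet b)
  have d3 : (φ (x * ltr b))⁻¹ * φ y = φ ((x * ltr b)⁻¹ * y) := by rw [← map_inv, ← map_mul]
  have d4 : ((x * ltr b)⁻¹ * y).norm ≤ M := by
    refine hM' _ ?_
    rw [← d3]
    have := dist_tri (φ (x * ltr b)) z (φ y)
    rw [dist_comm _ z] at this
    omega
  have d5 : ((x * ltr b)⁻¹ * p).norm ≤ M := ((k2.inv_mul h1).norm_le).trans d4
  have d6 := hc ((x * ltr b)⁻¹ * p)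
  rw [map_mul, map_inv] at d6
  have d7 := dist_tri z (φ (x * ltr b)) (φ p)
  have d8 := norm_le_of_le (φ p) z
  have d9 : c * ((x * ltr b)⁻¹ * p).norm ≤ c * M := Nat.mul_le_mul_left c d5
  rw [mul_add] at hzn
  omega

/-! ### Attracting fixed words -/

theorem prefixList_length {α : Type*} (W : InfWord α) (i : ℕ) : (prefixList W i).length = i := by
  simp [prefixList]

theorem prefixList_prefix {α : Type*} (W : InfWord α) {i j : ℕ} (h : i ≤ j) :
    prefixList W i <+: prefixList W j := by
  obtain ⟨d, rfl⟩ := Nat.exists_eq_add_of_le h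
  rw [prefixList, prefixList, List.range_add, List.map_append]
  exact List.prefix_append _ _

theorem prefixList_succ {α : Type*} (W : InfWord α) (i : ℕ) :
    prefixList W (i + 1) = prefixList W i ++ [W.1 i] := by
  simp [prefixList, List.range_succ]

theorem wordPrefix_succ {α : Type*} (W : InfWord α) (i : ℕ) :
    wordPrefix W (i + 1) = wordPrefix W i * ltr (W.1 i) := by
  rw [wordPrefix, prefixList_succ, ← FreeGroup.mul_mk]; rfl

theorem isReduced_prefixList {α : Type*} (W : InfWord α) (i : ℕ) :
    FreeGroup.IsReduced (prefixList W i) := by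
  rw [FreeGroup.IsReduced, List.isChain_iff_getElem]
  intro k hk h
  simp only [prefixList, List.getElem_map, List.getElem_range] at h ⊢
  by_contra hne
  refine W.2 k (Prod.ext h.symm ?_)
  simp only [linv]
  cases h1 : (W.1 k).2 <;> cases h2 : (W.1 (k + 1)).2 <;> simp_all

theorem toWord_wordPrefix (W : InfWord α) (i : ℕ) : (wordPrefix W i).toWord = prefixList W i := by
  rw [wordPrefix, FreeGroup.toWord_mk, (isReduced_prefixList W i).reduce_eq]

theorem norm_wordPrefix (W : InfWord α) (i : ℕ) : (wordPrefix W i).norm = i := by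
  rw [FreeGroup.norm, toWord_wordPrefix, prefixList_length]

theorem pre_wordPrefix (W : InfWord α) {i j : ℕ} (h : i ≤ j) :
    Pre (wordPrefix W i) (wordPrefix W j) := by
  rw [Pre, toWord_wordPrefix, toWord_wordPrefix]; exact prefixList_prefix W h

theorem eq_wordPrefix {W : InfWord α} {x : FreeGroup α} {j : ℕ} (h : Pre x (wordPrefix W j)) :
    x = wordPrefix W x.norm :=
  (h.total (pre_wordPrefix W (by simpa [norm_wordPrefix] using h.norm_le))
    (by rw [norm_wordPrefix])).eq_of_norm (by rw [norm_wordPrefix])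

theorem le_commonPrefixLength {β : Type*} [DecidableEq β] (m : ℕ) (L K : List β) :
    m ≤ commonPrefixLength L K ↔ ∃ P, P.length = m ∧ P <+: L ∧ P <+: K := by
  induction L generalizing K m with
  | nil =>
    simp only [commonPrefixLength, Nat.le_zero]
    constructor
    · rintro rfl; exact ⟨[], rfl, List.nil_prefix, List.nil_prefix⟩
    · rintro ⟨P, rfl, h, _⟩; rw [List.prefix_nil.1 h]; rfl
  | cons a as ih =>
    cases K with
    | nil =>
      simp only [commonPrefixLength, Nat.le_zero]
      constructor
      · rintro rfl; exact ⟨[], rfl, List.nil_prefix, List.nil_prefix⟩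
      · rintro ⟨P, rfl, _, h⟩; rw [List.prefix_nil.1 h]; rfl
    | cons b bs =>
      cases m with
      | zero => simp only [Nat.zero_le, true_iff]; exact ⟨[], rfl, List.nil_prefix, List.nil_prefix⟩
      | succ m =>
        by_cases hab : a = b
        · subst hab
          simp only [commonPrefixLength, if_true, Nat.succ_le_succ_iff, ih]
          constructor
          · rintro ⟨P, rfl, h1, h2⟩
            exact ⟨a :: P, rfl, List.cons_prefix_cons.2 ⟨rfl, h1⟩,
              List.cons_prefix_cons.2 ⟨rfl, h2⟩⟩
          · rintro ⟨P, hP, h1, h2⟩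
            cases P with
            | nil => simp at hP
            | cons c P =>
              exact ⟨P, by simpa using hP, (List.cons_prefix_cons.1 h1).2,
                (List.cons_prefix_cons.1 h2).2⟩
        · simp only [commonPrefixLength, if_neg hab]
          constructor
          · intro h; omega
          · rintro ⟨P, hP, h1, h2⟩
            cases P with
            | nil => simp at hP
            | cons c P =>
              exact absurd ((List.cons_prefix_cons.1 h1).1.symm.trans
                (List.cons_prefix_cons.1 h2).1) hab

theorem le_wedgeF {W : InfWord α} {g : FreeGroup α} {m : ℕ} :
    m ≤ wedgeF W g ↔ Pre (wordPrefix W m) g := by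
  rw [wedgeF, le_commonPrefixLength, Pre, toWord_wordPrefix]
  constructor
  · rintro ⟨P, hP, h1, h2⟩
    have : P.length ≤ (prefixList W g.toWord.length).length := h1.length_le
    rw [prefixList_length] at this
    have h3 := List.prefix_of_prefix_length_le h1 (prefixList_prefix W (i := m) (by omega))
      (by rw [prefixList_length]; omega)
    rwa [h3.eq_of_length (by rw [prefixList_length, hP])] at h2
  · intro h
    have := h.length_le
    rw [prefixList_length] at this
    exact ⟨_, prefixList_length W m, prefixList_prefix W this, h⟩

/-- A locally uniform form of attraction: beyond some stage, every word extending `W_i` is mapped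
to a word extending `W_{i + m}`. -/
def Att (φ : FreeGroup α →* FreeGroup α) (W : InfWord α) : Prop :=
  ∀ m, ∃ i₀, ∀ i ≥ i₀, ∀ u, Pre (wordPrefix W i) u → Pre (wordPrefix W (i + m)) (φ u)

theorem att_of_attracting [Fintype α] {φ : FreeGroup α →* FreeGroup α}
    (hφ : Function.Injective φ) {W : InfWord α} (h : IsAttractingFixedWord φ W) : Att φ W := by
  obtain ⟨C, hC⟩ := bounded_cancellation hφ
  intro m
  obtain ⟨i₀, hi⟩ := eventually_atTop.1 (tendsto_atTop.1 h.2 ((m + C : ℕ) : ℤ))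
  refine ⟨i₀, fun i hii u hu => ?_⟩
  have h1 := hi i hii
  have h2 : Pre (wordPrefix W (i + m + C)) (φ (wordPrefix W i)) := by
    rw [← le_wedgeF]; push_cast at h1; omega
  refine hC _ _ _ hu ((pre_wordPrefix W (by omega)).trans h2) ?_
  have := h2.norm_le
  rw [norm_wordPrefix] at this ⊢
  omega

theorem Att.iter {φ : FreeGroup α →* FreeGroup α} {W : InfWord α} (h : Att φ W) {N : ℕ}
    (hN : 0 < N) : Att (iter φ N) W := by
  obtain ⟨M, rfl⟩ := Nat.exists_eq_succ_of_ne_zero hN.ne'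
  clear hN
  induction M with
  | zero => exact h
  | succ M ih =>
    intro m
    obtain ⟨i₁, h1⟩ := h m
    obtain ⟨i₂, h2⟩ := ih 0
    refine ⟨max i₁ i₂, fun i hi u hu => ?_⟩
    have h3 := h2 i (le_trans (le_max_right _ _) hi) u hu
    have h4 := h1 i (le_trans (le_max_left _ _) hi) _ h3
    rwa [← show ZZFix.iter φ (M + 1 + 1) u = φ (ZZFix.iter φ (M + 1) u) from
      Function.iterate_succ_apply' _ _ _] at h4

/-- The iterates of a far prefix of an attracting word share longer and longer prefixes with it. -/
theorem Att.good {φ : FreeGroup α →* FreeGroup α} {W : InfWord α} (h : Att φ W) (i : ℕ) :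
    Good φ (wordPrefix W i) := by
  obtain ⟨i₀, h1⟩ := h 1
  have h2 : ∀ k, Pre (wordPrefix W (i₀ + k)) (ZZFix.iter φ k (wordPrefix W i₀)) := by
    intro k
    induction k with
    | zero => exact pre_refl _
    | succ k ih =>
      have := h1 (i₀ + k) (by omega) _ ih
      rwa [← show ZZFix.iter φ (k + 1) (wordPrefix W i₀) = φ (ZZFix.iter φ k (wordPrefix W i₀)) from
        Function.iterate_succ_apply' _ _ _] at this
  exact ⟨wordPrefix W i₀, Ev.of_ge (N := i) fun k hk =>
    (pre_wordPrefix W (by omega)).trans (h2 k)⟩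

theorem good_of_pre_per {φ : FreeGroup α →* FreeGroup α} {x t : FreeGroup α} (ht : t ∈ Per φ)
    (h : Pre x t) : Good φ x :=
  ⟨t, (mem_Per.1 ht).mono fun k hk => by rw [hk]; exact h⟩

section
variable {ψ : FreeGroup α →* FreeGroup α} {P : Subgroup (FreeGroup α)}

/-- From stage `I` on, `ψ` pushes forward along `W`. -/
def Pushes (ψ : FreeGroup α →* FreeGroup α) (W : InfWord α) (I : ℕ) : Prop :=
  ∀ i ≥ I, ∀ u, Pre (wordPrefix W i) u → Pre (wordPrefix W (i + 1)) (ψ u)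

theorem displacement_eq (hP : ∀ s ∈ P, ψ s = s) {x y s : FreeGroup α} (hs : s ∈ P)
    (h : x = s * y) : x⁻¹ * ψ x = y⁻¹ * ψ y := by
  rw [h, map_mul, hP s hs]; group

/-- The first letter of `x⁻¹ ψ(x)` determines how an attracting word continues after `x`; it
depends only on the coset of `x`. -/
theorem continue_translate (hP : ∀ s ∈ P, ψ s = s) {W W' : InfWord α} {I I' : ℕ}
    (hW : Pushes ψ W I) (hW' : Pushes ψ W' I') {i i' : ℕ} (hi : I ≤ i) (hi' : I' ≤ i')
    {s : FreeGroup α} (hs : s ∈ P) (h : wordPrefix W i = s * wordPrefix W' i') (t : ℕ) :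
    wordPrefix W (i + t) = s * wordPrefix W' (i' + t) := by
  induction t with
  | zero => exact h
  | succ t ih =>
    have key : ∀ (W : InfWord α) (I i : ℕ), Pushes ψ W I → I ≤ i →
        Pre (ltr (W.1 i)) ((wordPrefix W i)⁻¹ * ψ (wordPrefix W i)) := by
      intro W I i hW hi
      have h1 := hW i hi _ (pre_refl _)
      have h2 := (pre_wordPrefix W (Nat.le_succ i)).inv_mul h1
      rwa [wordPrefix_succ, inv_mul_cancel_left] at h2
    have h1 := key W I (i + t) hW (by omega)
    have h2 := key W' I' (i' + t) hW' (by omega)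
    rw [displacement_eq hP hs ih] at h1
    rw [← add_assoc, ← add_assoc, wordPrefix_succ, wordPrefix_succ, ih, pre_ltr_unique h1 h2,
      mul_assoc]

theorem norm_displacement (hW : Att ψ W) (m : ℕ) : ∃ i₀, ∀ i ≥ i₀,
    m ≤ ((wordPrefix W i)⁻¹ * ψ (wordPrefix W i)).norm := by
  obtain ⟨i₀, h⟩ := hW m
  refine ⟨i₀, fun i hi => ?_⟩
  have h1 := h i hi _ (pre_refl _)
  have h2 := pre_iff.1 ((pre_wordPrefix W (Nat.le_add_right i m)).trans h1)
  have h3 := h1.norm_le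
  rw [norm_wordPrefix] at h2 h3
  omega

/-- Far enough out, distinct prefixes of an attracting word lie in distinct cosets. -/
theorem prefix_coset_inj (hP : ∀ s ∈ P, ψ s = s) {W : InfWord α} {I : ℕ} (hA : Att ψ W)
    (hW : Pushes ψ W I) {i i' : ℕ} (hi : I ≤ i) (hi' : I ≤ i') {s : FreeGroup α} (hs : s ∈ P)
    (h : wordPrefix W i = s * wordPrefix W i') : i = i' := by
  have key : ∀ i i' : ℕ, I ≤ i → i < i' → ∀ s ∈ P,
      wordPrefix W i = s * wordPrefix W i' → False := by
    intro i i' hi hlt s hs h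
    obtain ⟨d, rfl⟩ := Nat.exists_eq_add_of_le hlt.le
    have hper : ∀ k, (wordPrefix W (i + k * d))⁻¹ * ψ (wordPrefix W (i + k * d)) =
        (wordPrefix W i)⁻¹ * ψ (wordPrefix W i) := by
      intro k
      induction k with
      | zero => simp
      | succ k ih =>
        have h1 := continue_translate hP hW hW hi (by omega) hs h (k * d)
        have h2 := displacement_eq hP hs h1
        rw [← ih, h2, show i + d + k * d = i + (k + 1) * d by ring]
    obtain ⟨i₀, h0⟩ := norm_displacement hA (((wordPrefix W i)⁻¹ * ψ (wordPrefix W i)).norm + 1)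
    have := h0 (i + i₀ * d) (by nlinarith)
    rw [hper] at this
    omega
  rcases lt_trichotomy i i' with h1 | h1 | h1
  · exact (key i i' hi h1 s hs h).elim
  · exact h1
  · exact (key i' i hi' h1 s⁻¹ (P.inv_mem hs) (by rw [h]; group)).elim

end

/-- Two attracting words whose far prefixes share a coset of the periodic subgroup are
equivalent. -/
theorem equiv_of_coset {φ : FreeGroup α →* FreeGroup α} {N : ℕ}
    (hP : ∀ s ∈ Per φ, iter φ N s = s) {W W' : InfWord α} {I I' : ℕ}
    (hA : Att φ W) (hA' : Att φ W') (hN : 0 < N)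
    (hW : Pushes (iter φ N) W I) (hW' : Pushes (iter φ N) W' I')
    {i i' : ℕ} (hi : I ≤ i) (hi' : I' ≤ i') {s : FreeGroup α} (hs : s ∈ Per φ)
    (h : wordPrefix W i = s * wordPrefix W' i') : EquivFixedWords φ W' W := by
  have hcont := continue_translate hP hW hW' hi hi' hs h
  have hφs : φ s ∈ Per φ := by
    refine (mem_Per.1 hs).mono fun k hk => ?_
    rw [iter_apply] at *
    rw [← Function.iterate_succ_apply, Function.iterate_succ_apply', hk]
  obtain ⟨c, hc⟩ : ∃ c, c = s⁻¹ * φ s := ⟨_, rfl⟩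
  have hcP : c ∈ Per φ := hc ▸ (Per φ).mul_mem ((Per φ).inv_mem hs) hφs
  obtain ⟨j₁, hj₁⟩ := hA 0
  obtain ⟨j₂, hj₂⟩ := hA' 0
  obtain ⟨t, ht⟩ : ∃ t, t = j₁ + j₂ + I' + s.norm + 2 * c.norm + 1 := ⟨_, rfl⟩
  have hlong : ∀ c' x : FreeGroup α, Pre (c' * x) c' → x.norm ≤ 2 * c'.norm := by
    intro c' x hx
    have h1 := hx.norm_le
    have h2 := FreeGroup.norm_mul_le c'⁻¹ (c' * x)
    rw [inv_mul_cancel_left, FreeGroup.norm_inv_eq] at h2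
    omega
  have hlen := norm_wordPrefix W' (i' + t)
  have e1 : Pre (wordPrefix W' (i' + t)) (c * φ (wordPrefix W' (i' + t))) := by
    have h1 := hj₁ (i + t) (by omega) _ (pre_refl _)
    rw [add_zero] at h1
    rcases h1.mul_left s⁻¹ with h2 | h2
    · have h3 := h2.norm_le
      rw [hcont t, inv_mul_cancel_left, hlen, FreeGroup.norm_inv_eq] at h3
      omega
    · rwa [hcont t, inv_mul_cancel_left, map_mul, ← mul_assoc, ← hc] at h2
  have e2 : Pre (c * wordPrefix W' (i' + t)) (c * φ (wordPrefix W' (i' + t))) := by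
    have h1 := hj₂ (i' + t) (by omega) _ (pre_refl _)
    rw [add_zero] at h1
    rcases h1.mul_left c with h2 | h2
    · have := hlong _ _ h2
      omega
    · exact h2
  have hc1 : c = 1 := by
    have key : ∀ c' : FreeGroup α, c' ∈ Per φ → c'.norm = c.norm →
        Pre (c' * wordPrefix W' (i' + t)) (wordPrefix W' (i' + t)) → c' = 1 := by
      intro c' hcP' hcn hpre
      have h3 := eq_wordPrefix hpre
      have h4 := norm_le_of_le (wordPrefix W' (i' + t)) c'⁻¹
      rw [FreeGroup.norm_inv_eq, inv_inv] at h4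
      have h5 := prefix_coset_inj hP (hA'.iter hN) hW' (i := (c' * wordPrefix W' (i' + t)).norm)
        (i' := i' + t) (by omega) (by omega) hcP' h3.symm
      rw [h5] at h3
      exact mul_eq_right.1 h3
    rcases le_total (c * wordPrefix W' (i' + t)).norm (wordPrefix W' (i' + t)).norm with h3 | h3
    · exact key c hcP rfl (e2.total e1 h3)
    · have h4 := e1.total e2 h3
      refine inv_eq_one.1 (key c⁻¹ ((Per φ).inv_mem hcP) FreeGroup.norm_inv_eq ?_)
      rcases h4.mul_left c⁻¹ with h5 | h5
      · have := hlong _ _ h5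
        rw [FreeGroup.norm_inv_eq] at this
        omega
      · rwa [inv_mul_cancel_left] at h5
  refine ⟨s, ?_, ?_⟩
  · change φ s = s
    rw [hc1] at hc
    exact (inv_mul_eq_one.1 hc.symm).symm
  · refine tendsto_atTop.2 fun m => eventually_atTop.2 ⟨i' + m, fun j hj => ?_⟩
    obtain ⟨d, rfl⟩ := Nat.exists_eq_add_of_le (show i' ≤ j by omega)
    rw [le_wedgeF]
    change Pre _ (s * wordPrefix W' (i' + d))
    rw [← hcont d]
    exact pre_wordPrefix W (by omega)

/-- The fundamental estimate for finitely many pairwise inequivalent attracting words. -/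
theorem fundamental_words [Fintype α] {φ : FreeGroup α →* FreeGroup α}
    (hφ : Function.Injective φ) {N : ℕ} (hN : 0 < N) (hP : ∀ s ∈ Per φ, iter φ N s = s)
    (T : Finset (FreeGroup α)) (hT : ∀ t ∈ T, t ∈ Per φ) {ι : Type*} (s : Finset ι)
    (W : ι → InfWord α) (hW : ∀ j ∈ s, Att φ (W j))
    (hne : ∀ j ∈ s, ∀ j' ∈ s, EquivFixedWords φ (W j) (W j') → j = j') :
    ∃ J : Finset (FreeGroup α), (∀ j ∈ J, j ∈ Per φ) ∧
      (∀ t ∈ T, t ∈ Subgroup.closure (J : Set (FreeGroup α))) ∧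
      2 * J.card + s.card ≤ 2 * Fintype.card α := by
  classical
  have hpush : ∀ j ∈ s, ∃ I, Pushes (iter φ N) (W j) I := fun j hj => (hW j hj).iter hN 1
  choose! I hI using hpush
  -- a common stage from which all the words are pushed forward
  let I₀ := s.sup I
  have hI₀ : ∀ j ∈ s, Pushes (iter φ N) (W j) I₀ := fun j hj i hi =>
    hI j hj i ((Finset.le_sup hj).trans hi)
  have heq : ∀ j ∈ s, ∀ j' ∈ s, ∀ i i', I₀ ≤ i → I₀ ≤ i' →
      wordPrefix (W j) i * (wordPrefix (W j') i')⁻¹ ∈ Per φ → j = j' ∧ i = i' := by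
    intro j hj j' hj' i i' hi hi' h
    have h1 : wordPrefix (W j) i =
      wordPrefix (W j) i * (wordPrefix (W j') i')⁻¹ * wordPrefix (W j') i' := by group
    have h2 := hne j' hj' j hj (equiv_of_coset hP (hW j hj) (hW j' hj') hN (hI₀ j hj)
      (hI₀ j' hj') hi hi' h h1)
    subst h2
    exact ⟨rfl, prefix_coset_inj hP ((hW _ hj).iter hN) (hI₀ _ hj) hi hi' h h1⟩
  let X := pcl (insert 1 T ∪ s.image fun j => wordPrefix (W j) I₀)
  have hbd : ∀ j x, ∃ b, j ∈ s → ∀ i ≥ b, x * (wordPrefix (W j) i)⁻¹ ∉ Per φ := by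
    intro j x
    by_cases hx : ∃ i ≥ I₀, x * (wordPrefix (W j) i)⁻¹ ∈ Per φ
    · obtain ⟨i, hi, hxi⟩ := hx
      refine ⟨i + 1, fun hj k hk h => ?_⟩
      have h1 := (Per φ).mul_mem ((Per φ).inv_mem hxi) h
      rw [mul_inv_rev, inv_inv, mul_assoc, inv_mul_cancel_left] at h1
      have := (heq j hj j hj i k hi (by omega) h1).2
      omega
    · push Not at hx
      exact ⟨I₀, fun _ i hi => hx i hi⟩
  choose b hb using hbd
  let L := I₀ + s.sup fun j => X.sup fun x => b j x
  have hL : ∀ j ∈ s, ∀ x ∈ X, x * (wordPrefix (W j) (L + 1))⁻¹ ∉ Per φ := by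
    intro j hj x hx
    refine hb j x hj _ ?_
    have h1 : b j x ≤ X.sup fun x => b j x := Finset.le_sup (f := fun x => b j x) hx
    have h2 : (X.sup fun x => b j x) ≤ s.sup fun j => X.sup fun x => b j x :=
      Finset.le_sup (f := fun j => X.sup fun x => b j x) hj
    simp only [L]
    omega
  have hLI : I₀ ≤ L := Nat.le_add_right _ _
  let V := pcl (insert 1 T ∪ s.image fun j => wordPrefix (W j) L)
  have hV : PC V := pc_pcl ⟨1, by simp⟩
  have hVmem : ∀ x ∈ V, (∃ t ∈ insert 1 T, Pre x t) ∨
      ∃ j ∈ s, ∃ i ≤ L, x = wordPrefix (W j) i := by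
    intro x hx
    obtain ⟨u, hu, hp⟩ := mem_pcl.1 hx
    rcases Finset.mem_union.1 hu with hu | hu
    · exact Or.inl ⟨u, hu, hp⟩
    · obtain ⟨j, hj, rfl⟩ := Finset.mem_image.1 hu
      refine Or.inr ⟨j, hj, x.norm, ?_, eq_wordPrefix hp⟩
      simpa [norm_wordPrefix] using hp.norm_le
  have hT' : ∀ t ∈ insert 1 T, t ∈ Per φ := by
    intro t ht
    rcases Finset.mem_insert.1 ht with rfl | ht
    · exact (Per φ).one_mem
    · exact hT t ht
  let f : ι → FreeGroup α × Letter α := fun j => (wordPrefix (W j) L, (W j).1 L)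
  have hf : ∀ j, (f j).1 * ltr (f j).2 = wordPrefix (W j) (L + 1) := fun j =>
    (wordPrefix_succ _ _).symm
  have hfinj : ∀ j ∈ s, ∀ j' ∈ s,
      (f j).1 * ltr (f j).2 * ((f j').1 * ltr (f j').2)⁻¹ ∈ Per φ → j = j' := by
    intro j hj j' hj' h
    rw [hf, hf] at h
    exact (heq j hj j' hj' _ _ (by omega) (by omega) h).1
  obtain ⟨J, hJ1, hJ2, hJ3⟩ := fundamental hφ hV (fun x hx => by
      rcases hVmem x hx with ⟨t, ht, hp⟩ | ⟨j, hj, i, _, rfl⟩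
      · exact good_of_pre_per (hT' t ht) hp
      · exact (hW j hj).good i) (s.image f) (fun e he => by
      obtain ⟨j, hj, rfl⟩ := Finset.mem_image.1 he
      refine ⟨subset_pcl _ (Finset.mem_union_right _
        (Finset.mem_image.2 ⟨j, hj, rfl⟩)), ?_, ?_⟩
      · rw [hf]; exact (hW j hj).good _
      · intro x hx h
        rw [hf] at h
        rcases hVmem x hx with ⟨t, ht, hp⟩ | ⟨j', hj', i, hi, rfl⟩
        · exact hL j hj x (mem_pcl.2 ⟨t, Finset.mem_union_left _ ht, hp⟩) h
        · rcases Nat.lt_or_ge i I₀ with hi2 | hi2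
          · exact hL j hj _ (mem_pcl.2 ⟨_, Finset.mem_union_right _
              (Finset.mem_image.2 ⟨j', hj', rfl⟩), pre_wordPrefix _ hi2.le⟩) h
          · have := (heq j' hj' j hj _ _ hi2 (by omega) h).2
            omega) (fun e he e' he' h => by
      obtain ⟨j, hj, rfl⟩ := Finset.mem_image.1 he
      obtain ⟨j', hj', rfl⟩ := Finset.mem_image.1 he'
      rw [hfinj j hj j' hj' h])
  refine ⟨J, hJ1, fun t ht => hJ2 t (subset_pcl _ (Finset.mem_union_left _
    (Finset.mem_insert_of_mem ht))) (hT t ht), ?_⟩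
  rwa [Finset.card_image_of_injOn] at hJ3
  intro j hj j' hj' h
  refine hfinj j hj j' hj' ?_
  rw [h, mul_inv_cancel]
  exact (Per φ).one_mem

/-- Finitely many periodic elements lie in a subgroup of rank at most `n`. -/
theorem fundamental_per [Fintype α] {φ : FreeGroup α →* FreeGroup α}
    (hφ : Function.Injective φ) (T : Finset (FreeGroup α)) (hT : ∀ t ∈ T, t ∈ Per φ) :
    ∃ J : Finset (FreeGroup α), (∀ j ∈ J, j ∈ Per φ) ∧
      (∀ t ∈ T, t ∈ Subgroup.closure (J : Set (FreeGroup α))) ∧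
      J.card ≤ Fintype.card α := by
  have hT' : ∀ t ∈ insert 1 T, t ∈ Per φ := by
    intro t ht
    rcases Finset.mem_insert.1 ht with rfl | ht
    · exact (Per φ).one_mem
    · exact hT t ht
  obtain ⟨J, h1, h2, h3⟩ := fundamental hφ (pc_pcl (Q := insert 1 T) ⟨1, by simp⟩)
    (fun x hx => by
      obtain ⟨t, ht, hp⟩ := mem_pcl.1 hx
      exact good_of_pre_per (hT' t ht) hp) ∅ (by simp) (by simp)
  refine ⟨J, h1, fun t ht => h2 t (subset_pcl _ (Finset.mem_insert_of_mem ht)) (hT t ht), ?_⟩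
  simp only [Finset.card_empty] at h3
  omega

/-! ### Ranks of subgroups of free groups -/

/-- A finite part of a basis needs at least as many generators: homomorphisms to `ℤ/2` supported on
that part are determined by their values on the generators. -/
theorem card_le_of_mem_closure {X : Type*} (Y : Finset X) (J : Finset (FreeGroup X))
    (h : ∀ y ∈ Y, FreeGroup.of y ∈ Subgroup.closure (J : Set (FreeGroup X))) :
    Y.card ≤ J.card := by
  classical
  let ext : (Y → Multiplicative (ZMod 2)) → FreeGroup X →* Multiplicative (ZMod 2) := fun v =>
    FreeGroup.lift fun x => if hx : x ∈ Y then v ⟨x, hx⟩ else 1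
  let f : (Y → Multiplicative (ZMod 2)) → (J → Multiplicative (ZMod 2)) := fun v j => ext v j
  have hf : Function.Injective f := by
    intro v w hvw
    have h1 : Set.EqOn (ext v) (ext w) (Subgroup.closure (J : Set (FreeGroup X))) :=
      MonoidHom.eqOn_closure fun j hj => congrFun hvw ⟨j, hj⟩
    funext y
    have h2 := h1 (h y y.2)
    simpa [ext] using h2
  have h1 := Fintype.card_le_of_injective f hf
  have h2 : Fintype.card (Multiplicative (ZMod 2)) = 2 := ZMod.card 2
  rw [Fintype.card_fun, Fintype.card_fun, h2, Fintype.card_coe, Fintype.card_coe] at h1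
  exact (Nat.pow_le_pow_iff_right one_lt_two).1 h1

theorem card_le_of_mem_closure_map {X G : Type*} [Group G] (e : FreeGroup X →* G)
    (he : Function.Injective e) (Y : Finset X) (J : Finset G) (hJ : ∀ j ∈ J, j ∈ e.range)
    (h : ∀ y ∈ Y, e (FreeGroup.of y) ∈ Subgroup.closure (J : Set G)) : Y.card ≤ J.card := by
  classical
  have hJ' : (J : Set G) ⊆ Set.range e := fun j hj => hJ j hj
  obtain ⟨J', hJ'⟩ : ∃ J' : Finset (FreeGroup X), J'.image e = J := by
    choose! g hg using hJ'
    refine ⟨J.image g, ?_⟩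
    rw [Finset.image_image]
    conv_rhs => rw [← Finset.image_id (s := J)]
    exact Finset.image_congr fun j hj => hg hj
  subst hJ'
  refine (card_le_of_mem_closure Y J' fun y hy => ?_).trans
    (Finset.card_image_of_injective _ he).ge
  have h1 := h y hy
  rw [Finset.coe_image, ← MonoidHom.map_closure] at h1
  exact (Subgroup.mem_map_iff_mem he).1 h1

/-- A subgroup all of whose finite subsets lie in `r`-generated subgroups of it is free of rank at
most `r`; freeness is the Nielsen–Schreier theorem. -/
theorem exists_basis_of_locally {X : Type*} (U : Subgroup (FreeGroup X)) (r : ℕ)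
    (h : ∀ T : Finset (FreeGroup X), (∀ t ∈ T, t ∈ U) → ∃ J : Finset (FreeGroup X),
      (∀ j ∈ J, j ∈ U) ∧ (∀ t ∈ T, t ∈ Subgroup.closure (J : Set (FreeGroup X))) ∧ J.card ≤ r) :
    ∃ r' ≤ r, ∃ e : FreeGroup (Fin r') →* FreeGroup X, Function.Injective e ∧ e.range = U := by
  classical
  let b : FreeGroup (IsFreeGroup.Generators U) →* FreeGroup X :=
    U.subtype.comp (IsFreeGroup.mulEquiv U).toMonoidHom
  have hb : Function.Injective b :=
    Subtype.val_injective.comp (IsFreeGroup.mulEquiv U).injective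
  have hbr : b.range = U := by
    ext x
    constructor
    · rintro ⟨y, rfl⟩; exact (IsFreeGroup.mulEquiv U y).2
    · intro hx
      refine ⟨(IsFreeGroup.mulEquiv U).symm ⟨x, hx⟩, ?_⟩
      simp [b]
  have hcard : ∀ Y : Finset (IsFreeGroup.Generators U), Y.card ≤ r := by
    intro Y
    obtain ⟨J, h1, h2, h3⟩ := h (Y.image fun y => b (FreeGroup.of y)) (by
      intro t ht
      obtain ⟨y, _, rfl⟩ := Finset.mem_image.1 ht
      exact hbr.le ⟨_, rfl⟩)
    exact (card_le_of_mem_closure_map b hb Y J (by rwa [hbr])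
      fun y hy => h2 _ (Finset.mem_image_of_mem _ hy)).trans h3
  have hfin : Finite (IsFreeGroup.Generators U) := by
    by_contra hinf
    rw [not_finite_iff_infinite] at hinf
    obtain ⟨Y, hY⟩ := Infinite.exists_subset_card_eq (IsFreeGroup.Generators U) (r + 1)
    have := hcard Y
    omega
  have := Fintype.ofFinite (IsFreeGroup.Generators U)
  refine ⟨Fintype.card (IsFreeGroup.Generators U), hcard Finset.univ,
    b.comp (FreeGroup.freeGroupCongr (Fintype.equivFin _).symm).toMonoidHom,
    hb.comp (MulEquiv.injective _), ?_⟩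
  refine Eq.trans ?_ hbr
  ext x
  constructor
  · rintro ⟨y, rfl⟩; exact ⟨_, rfl⟩
  · rintro ⟨y, rfl⟩
    obtain ⟨z, rfl⟩ := (FreeGroup.freeGroupCongr (Fintype.equivFin _).symm).surjective y
    exact ⟨z, rfl⟩

theorem exists_restrict {G H : Type*} [Group G] [Group H] (e : H →* G) (he : Function.Injective e)
    (φ : G →* G) (h : ∀ x, φ (e x) ∈ e.range) :
    ∃ ψ : H →* H, ∀ k x, e (iter ψ k x) = iter φ k (e x) := by
  let ψ : H →* H := (MonoidHom.ofInjective he).symm.toMonoidHom.comp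
    ((φ.comp e).codRestrict e.range h)
  have hψ : ∀ x, e (ψ x) = φ (e x) := fun x =>
    congrArg Subtype.val ((MonoidHom.ofInjective he).apply_symm_apply ⟨φ (e x), h x⟩)
  refine ⟨ψ, fun k x => ?_⟩
  induction k with
  | zero => rfl
  | succ k ih =>
    rw [iter_apply, iter_apply, Function.iterate_succ_apply', Function.iterate_succ_apply', hψ,
      ← iter_apply, ih, iter_apply]

theorem fixed_of_restrict {G H : Type*} [Group G] [Group H] {e : H →* G}
    (he : Function.Injective e) {φ : G →* G} (hφ : fixedSubgroup φ ≤ e.range) {ψ : H →* H}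
    (hψ : ∀ k x, e (iter ψ k x) = iter φ k (e x)) {J : Finset H}
    (hJ : Subgroup.closure (J : Set H) = fixedSubgroup ψ) :
    ∃ J' : Finset G, Subgroup.closure (J' : Set G) = fixedSubgroup φ ∧ J'.card ≤ J.card := by
  classical
  refine ⟨J.image e, ?_, Finset.card_image_le⟩
  have h1 : ∀ x, e (ψ x) = φ (e x) := hψ 1
  rw [Finset.coe_image, ← MonoidHom.map_closure, hJ]
  ext x
  constructor
  · rintro ⟨y, hy, rfl⟩
    change φ (e y) = e y
    rw [← h1, show ψ y = y from hy]
  · intro hx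
    obtain ⟨y, rfl⟩ := hφ hx
    exact ⟨y, he ((h1 y).trans hx), rfl⟩

/-! ### Endomorphisms of finite order -/

/-- Orbits of a map of prime order `p` have size `1` or `p`, so an invariant function that vanishes
at the fixed points has sum zero modulo `p`. -/
theorem finsum_eq_zero_of_invariant {X : Type*} {p : ℕ} [Fact p.Prime] (β : X → X)
    (hβ : ∀ x, β^[p] x = x) (g : X → ZMod p) (hg : ∀ x, g (β x) = g x)
    (hfin : (Function.support g).Finite) (h0 : ∀ x, β x = x → g x = 0) : ∑ᶠ x, g x = 0 := by
  classical
  rw [finsum_eq_sum g hfin, ← Finset.sum_fiberwise (s := hfin.toFinset) (g := g)]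
  refine Finset.sum_eq_zero fun v _ => ?_
  rw [Finset.sum_congr rfl (g := fun _ => v) fun x hx => (Finset.mem_filter.1 hx).2,
    Finset.sum_const, nsmul_eq_mul]
  set s := hfin.toFinset.filter fun x => g x = v with hs
  have hmem : ∀ x ∈ s, β x ∈ s := by
    intro x hx
    rw [hs, Finset.mem_filter, Set.Finite.mem_toFinset, Function.mem_support] at hx ⊢
    rwa [hg]
  let b : Function.End s := fun x => ⟨β x, hmem x x.2⟩
  have hb : ∀ k (x : s), ((b ^ k) x : X) = β^[k] x := by
    intro k
    induction k with
    | zero => intro x; rfl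
    | succ k ih =>
      intro x
      rw [pow_succ', Function.iterate_succ_apply']
      exact congrArg β (ih x)
  have hb1 : b ^ p ^ 1 = 1 := by
    rw [pow_one]
    funext x
    exact Subtype.ext ((hb p x).trans (hβ x))
  have h1 := Equiv.Perm.card_fixedPoints_modEq hb1
  have h2 : IsEmpty (Function.fixedPoints b) := by
    refine ⟨fun ⟨⟨x, hx⟩, h⟩ => ?_⟩
    have h3 : β x = x := congrArg Subtype.val h
    rw [hs, Finset.mem_filter, Set.Finite.mem_toFinset, Function.mem_support] at hx
    exact hx.1 (h0 _ h3)
  rw [Fintype.card_eq_zero (α := Function.fixedPoints b), Fintype.card_coe] at h1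
  rw [(ZMod.natCast_eq_zero_iff _ _).2 ((Nat.modEq_zero_iff_dvd).1 h1), zero_mul]

/-- Right almost invariance: right translation by any element changes only finitely many values. -/
def AI {G R : Type*} [Group G] (c : G → R) : Prop := ∀ s, {t | c (t * s) ≠ c t}.Finite

section
variable {G R : Type*} [Group G] [AddCommGroup R]

/-- The homomorphism `s ↦ ∑ₜ (c(ts) - c(t))` attached to an almost invariant function. -/
noncomputable def flow (c : G → R) (s : G) : R := ∑ᶠ t, (c (t * s) - c t)

theorem AI.support {c : G → R} (hc : AI c) (s : G) :
    (Function.support fun t => c (t * s) - c t).Finite :=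
  (hc s).subset fun t ht h => ht (by simp [h])

theorem flow_mul {c : G → R} (hc : AI c) (s s' : G) :
    flow c (s * s') = flow c s + flow c s' := by
  have h1 : flow c s' = ∑ᶠ t, (c (t * s * s') - c (t * s)) :=
    (finsum_comp_equiv (Equiv.mulRight s) (f := fun t => c (t * s') - c t)).symm
  have h2 : (Function.support fun t => c (t * s * s') - c (t * s)).Finite :=
    (hc.support s').preimage (f := fun t => t * s) (mul_left_injective s).injOn
  rw [h1, flow, flow, ← finsum_add_distrib (hc.support s) h2]
  refine finsum_congr fun t => ?_
  rw [mul_assoc]; abel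
end

open Classical in
/-- The indicator function of the half-space of words on the far side of the edge from `b` to
`b * l` of the Cayley tree. -/
noncomputable def half (p : ℕ) (e : FreeGroup α × Letter α) (t : FreeGroup α) : ZMod p :=
  if Pre (ltr e.2) (e.1⁻¹ * t) then 1 else 0

theorem pre_ltr_step {y : FreeGroup α} {l m : Letter α} (h1 : ¬ (y = 1 ∧ m = l))
    (h2 : ¬ (y = ltr l ∧ m = linv l)) : Pre (ltr l) (y * ltr m) ↔ Pre (ltr l) y := by
  have up : ∀ (y : FreeGroup α) (m : Letter α), ¬ (y = 1 ∧ m = l) → Pre y (y * ltr m) →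
      (Pre (ltr l) (y * ltr m) ↔ Pre (ltr l) y) := by
    intro y m h1 hy
    refine ⟨fun h => ?_, fun h => h.trans hy⟩
    rcases Nat.eq_zero_or_pos y.norm with h0 | h0
    · rw [FreeGroup.norm_eq_zero] at h0
      subst h0
      rw [one_mul] at h
      exact absurd ⟨rfl, pre_ltr_unique (pre_refl _) h⟩ h1
    · exact h.total hy (by rw [norm_ltr]; omega)
  rcases pre_mul_ltr y m with h | h
  · exact up y m h1 h.1
  · have e : y * ltr m * ltr (linv m) = y := by rw [ltr_linv, mul_inv_cancel_right]
    have := up (y * ltr m) (linv m) (by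
      rintro ⟨h3, h4⟩
      refine h2 ⟨?_, by rw [← h4, linv_linv]⟩
      rw [← e, h3, h4, one_mul]) (by rw [e]; exact h.1)
    rw [e] at this
    exact this.symm

theorem half_step {p : ℕ} {e : FreeGroup α × Letter α} {x : FreeGroup α} {m : Letter α}
    (h1 : ¬ (x = e.1 ∧ m = e.2)) (h2 : ¬ (x = e.1 * ltr e.2 ∧ m = linv e.2)) :
    half p e (x * ltr m) = half p e x := by
  unfold half
  rw [← mul_assoc, pre_ltr_step]
  · rintro ⟨h, h'⟩; exact h1 ⟨(inv_mul_eq_one.1 h).symm, h'⟩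
  · rintro ⟨h, h'⟩; exact h2 ⟨inv_mul_eq_iff_eq_mul.1 h, h'⟩

theorem half_cross (p : ℕ) (e : FreeGroup α × Letter α) :
    half p e (e.1 * ltr e.2) = 1 ∧ half p e e.1 = 0 := by
  unfold half
  constructor
  · rw [inv_mul_cancel_left, if_pos (pre_refl _)]
  · rw [inv_mul_cancel, if_neg]
    rw [pre_one_iff]; exact ltr_ne_one _

theorem half_ai (p : ℕ) (e : FreeGroup α × Letter α) : AI (half p e) := by
  have key : ∀ n, ∀ s : FreeGroup α, s.norm = n → {t | half p e (t * s) ≠ half p e t}.Finite := by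
    intro n
    induction n with
    | zero =>
      intro s hs
      rw [FreeGroup.norm_eq_zero] at hs; subst hs
      simp
    | succ n ih =>
      intro s hs
      obtain ⟨x, a, rfl, _, hx⟩ := exists_last (u := s) (by rintro rfl; simp at hs)
      refine ((ih x (by omega)).union
        (Set.toFinite {e.1 * x⁻¹, e.1 * ltr e.2 * x⁻¹})).subset fun t ht => ?_
      by_contra hcon
      simp only [Set.mem_union, Set.mem_ofPred_eq, Set.mem_insert_iff, Set.mem_singleton_iff, not_or,
        not_not] at hcon
      refine ht ?_
      rw [← mul_assoc, half_step, hcon.1]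
      · rintro ⟨h, _⟩; exact hcon.2.1 (by rw [← h, mul_inv_cancel_right])
      · rintro ⟨h, _⟩; exact hcon.2.2 (by rw [← h, mul_inv_cancel_right])
  exact fun s => key _ s rfl

/-- The product of the translates of a half-space under the powers of `β`. -/
noncomputable def orbitProd (p : ℕ) (β : FreeGroup α →* FreeGroup α) (e : FreeGroup α × Letter α)
    (t : FreeGroup α) : ZMod p := ∏ i ∈ Finset.range p, half p e (iter β i t)

/-- As `β` is injective, almost invariance is inherited from half-spaces. -/
theorem orbitProd_ai {p : ℕ} {β : FreeGroup α →* FreeGroup α} (hβ : Function.Injective β)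
    (e : FreeGroup α × Letter α) : AI (orbitProd p β e) := by
  intro s
  refine (Set.Finite.biUnion (Finset.range p).finite_toSet (t := fun i =>
    iter β i ⁻¹' {t | half p e (t * iter β i s) ≠ half p e t}) fun i _ =>
    (half_ai p e (iter β i s)).preimage (iter_injective hβ i).injOn).subset fun t ht => ?_
  by_contra hcon
  simp only [Set.mem_iUnion, not_exists, Set.mem_preimage, Set.mem_ofPred_eq, not_not] at hcon
  refine ht (Finset.prod_congr rfl fun i hi => ?_)
  rw [map_mul]
  exact hcon i hi

theorem orbitProd_invariant {p : ℕ} (hp : p ≠ 0) {β : FreeGroup α →* FreeGroup α}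
    (hβ : ∀ x, iter β p x = x) (e : FreeGroup α × Letter α) (t : FreeGroup α) :
    orbitProd p β e (β t) = orbitProd p β e t := by
  obtain ⟨q, hq⟩ := Nat.exists_eq_succ_of_ne_zero hp
  have h3 : ∀ i, iter β i (β t) = iter β (i + 1) t := fun i =>
    (Function.iterate_succ_apply _ _ _).symm
  have h4 : iter β 0 t = t := rfl
  have h5 : iter β (q + 1) t = t := by
    have := hβ t
    rwa [hq] at this
  unfold orbitProd
  simp only [h3]
  rw [show Finset.range p = Finset.range (q + 1) by rw [hq],
    Finset.prod_range_succ, h5, Finset.prod_range_succ', h4]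

theorem orbitProd_fixed {p : ℕ} (hp : p ≠ 0) {β : FreeGroup α →* FreeGroup α}
    (e : FreeGroup α × Letter α) {t : FreeGroup α} (ht : β t = t) :
    orbitProd p β e t = half p e t := by
  have h1 : ∀ i, iter β i t = t := fun i => Function.iterate_fixed ht i
  simp only [orbitProd, h1, Finset.prod_const, Finset.card_range]
  unfold half
  split_ifs
  · exact one_pow _
  · exact zero_pow hp

/-- The values of the flows on the Schreier generators: the flow attached to a non-tree edge `e`
takes the value `1` on the generator of `e` and `0` on the other ones. -/
theorem flow_σ [Fintype α] {p : ℕ} [hp : Fact p.Prime] {β : FreeGroup α →* FreeGroup α}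
    (hβi : Function.Injective β)
    (hβ : ∀ x, iter β p x = x) {V : Finset (FreeGroup α)} (D : Schreier (fixedSubgroup β) V)
    {e e' : FreeGroup α × Letter α} (he : e ∈ D.NT) (he' : e' ∈ D.NT) :
    flow (orbitProd p β e) (D.σ e') = if e = e' then 1 else 0 := by
  classical
  have hp0 : p ≠ 0 := hp.out.ne_zero
  obtain ⟨heI, hepos, heB⟩ := (D.mem_NT e).1 he
  obtain ⟨heI', hepos', heB'⟩ := (D.mem_NT e').1 he'
  obtain ⟨heb, -⟩ := (D.mem_I e).1 heI
  obtain ⟨heb', -⟩ := (D.mem_I e').1 heI'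
  obtain ⟨hr, hσ⟩ := D.rep_I heI'
  -- within a translate of the tree `B` by an element of the fixed subgroup, the edge is not crossed
  have htree : ∀ t ∈ fixedSubgroup β, ∀ n, ∀ b ∈ D.B, b.norm = n →
      half p e (t * b) = half p e t := by
    intro t ht n
    induction n with
    | zero =>
      intro b _ h0
      rw [FreeGroup.norm_eq_zero] at h0; rw [h0, mul_one]
    | succ n ih =>
      intro b hb hn
      obtain ⟨x, a, rfl, hx, hxn⟩ := exists_last (u := b) (by rintro rfl; simp at hn)
      have hxB := D.pcB.2 _ _ hx hb
      rw [← mul_assoc, half_step, ih x hxB (by omega)]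
      · rintro ⟨h1, h2⟩
        have h3 := D.inj e.1 heb x hxB (by rwa [← h1, mul_inv_cancel_right])
        exact heB (by rw [h3, ← h2]; exact hb)
      · rintro ⟨h1, h2⟩
        have h3 := D.inj e.1 heb (x * ltr a) hb (by
          rw [eq_mul_inv_of_mul_eq h1.symm, h2, ltr_linv]
          simpa [mul_assoc] using ht)
        refine heB ?_
        rw [h3, h2, ltr_linv, inv_mul_cancel_right]
        exact hxB
  have hval : ∀ t, β t = t → orbitProd p β e (t * D.σ e') - orbitProd p β e t =
      if e = e' ∧ t = 1 then 1 else 0 := by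
    intro t ht
    have htσ : β (t * D.σ e') = t * D.σ e' := (fixedSubgroup β).mul_mem ht hσ
    rw [orbitProd_fixed hp0 e ht, orbitProd_fixed hp0 e htσ, ← htree _ htσ _ _ hr rfl,
      ← htree t ht _ _ heb' rfl, show t * D.σ e' * D.rep (e'.1 * ltr e'.2) =
        t * e'.1 * ltr e'.2 by rw [Schreier.σ]; group]
    by_cases h : e = e' ∧ t = 1
    · obtain ⟨rfl, rfl⟩ := h
      rw [one_mul, (half_cross p e).1, (half_cross p e).2]
      simp
    · rw [if_neg h, half_step, sub_self]
      · rintro ⟨h1, h2⟩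
        have h3 := D.inj e.1 heb e'.1 heb' (by rwa [← h1, mul_inv_cancel_right])
        refine h ⟨Prod.ext h3 h2.symm, ?_⟩
        rwa [h3, mul_eq_right] at h1
      · rintro ⟨_, h2⟩
        rw [h2, linv, hepos] at hepos'
        simp at hepos'
  let g : FreeGroup α → ZMod p := fun t =>
    orbitProd p β e (t * D.σ e') - orbitProd p β e t
  let d : FreeGroup α → ZMod p := fun t => if e = e' ∧ t = 1 then 1 else 0
  have hgs : (Function.support g).Finite := (orbitProd_ai hβi e).support _
  have hds : (Function.support d).Finite := by
    refine (Set.finite_singleton 1).subset fun t ht => ?_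
    by_contra h
    exact ht (if_neg fun h' => h h'.2)
  have h0 := finsum_eq_zero_of_invariant (p := p) β hβ (fun t => g t - d t) (by
    intro t
    have h1 : g (β t) = g t := by
      change orbitProd p β e (β t * D.σ e') - orbitProd p β e (β t) = _
      rw [show β t * D.σ e' = β (t * D.σ e') by rw [map_mul, show β (D.σ e') = D.σ e' from hσ],
        orbitProd_invariant hp0 hβ, orbitProd_invariant hp0 hβ]
    have h2 : d (β t) = d t := by
      simp only [d, show β t = 1 ↔ t = 1 from map_eq_one_iff β hβi]
    simp only [h1, h2]) ((hgs.union hds).subset (Function.support_sub g d))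
    (fun t ht => sub_eq_zero.2 (hval t ht))
  rw [finsum_sub_distrib hgs hds, sub_eq_zero] at h0
  refine h0.trans ?_
  rw [finsum_eq_single d 1 (fun t ht => if_neg fun h => ht h.2)]
  simp [d]

/-- Finitely many elements fixed by an automorphism of prime order lie in a subgroup of fixed
elements generated by at most `n` elements. -/
theorem fixed_prime_order [Fintype α] {p : ℕ} [hp : Fact p.Prime]
    {β : FreeGroup α →* FreeGroup α} (hβ : ∀ x, iter β p x = x) (T : Finset (FreeGroup α))
    (hT : ∀ t ∈ T, t ∈ fixedSubgroup β) : ∃ J : Finset (FreeGroup α),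
      (∀ j ∈ J, j ∈ fixedSubgroup β) ∧
      (∀ t ∈ T, t ∈ Subgroup.closure (J : Set (FreeGroup α))) ∧ J.card ≤ Fintype.card α := by
  classical
  have hβi : Function.Injective β := by
    obtain ⟨q, hq⟩ := Nat.exists_eq_succ_of_ne_zero hp.out.ne_zero
    intro x y h
    have h1 : ∀ x, iter β p x = iter β q (β x) := fun x => by
      rw [hq]; exact Function.iterate_succ_apply _ _ _
    rw [← hβ x, ← hβ y, h1, h1, h]
  have hV : PC (pcl (insert 1 T)) := pc_pcl ⟨1, by simp⟩
  obtain ⟨D⟩ := exists_schreier (fixedSubgroup β) hV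
  refine ⟨D.NT.image D.σ, ?_, fun t ht => ?_, ?_⟩
  · intro j hj
    obtain ⟨e, he, rfl⟩ := Finset.mem_image.1 hj
    exact (D.rep_I ((D.mem_NT e).1 he).1).2
  · rw [Finset.coe_image]
    exact D.mem_closure hV (subset_pcl _ (Finset.mem_insert_of_mem ht)) (hT t ht)
  · refine Finset.card_image_le.trans ?_
    -- the flows are linearly independent homomorphisms to `ℤ/p`; compare cardinalities
    let f : (D.NT → ZMod p) → FreeGroup α →* Multiplicative (ZMod p) := fun v =>
      { toFun := fun x => Multiplicative.ofAdd (∑ e : D.NT, v e * flow (orbitProd p β e.1) x)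
        map_one' := by
          have h : ∀ e, flow (orbitProd p β e) 1 = 0 := fun e => by simp [flow]
          simp [h]
        map_mul' := fun x y => by
          rw [← ofAdd_add, ← Finset.sum_add_distrib]
          congr 1
          refine Finset.sum_congr rfl fun e _ => ?_
          rw [flow_mul (orbitProd_ai hβi e.1), mul_add] }
    have hf : ∀ v x, f v x =
      Multiplicative.ofAdd (∑ e : D.NT, v e * flow (orbitProd p β e.1) x) := fun _ _ => rfl
    let r : (D.NT → ZMod p) → α → Multiplicative (ZMod p) := fun v i => f v (FreeGroup.of i)
    have hr : Function.Injective r := by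
      intro v w hvw
      have h1 : f v = f w := FreeGroup.ext_hom _ _ fun i => congrFun hvw i
      funext e
      have h2 := congrArg (fun g => Multiplicative.toAdd (g (D.σ e.1))) h1
      simp only [hf, toAdd_ofAdd] at h2
      have h3 : ∀ v : D.NT → ZMod p,
          ∑ e' : D.NT, v e' * flow (orbitProd p β e'.1) (D.σ e.1) = v e := by
        intro v
        rw [Finset.sum_eq_single e]
        · rw [flow_σ hβi hβ D e.2 e.2, if_pos rfl, mul_one]
        · intro e' _ hne
          rw [flow_σ hβi hβ D e'.2 e.2, if_neg fun h => hne (Subtype.ext h), mul_zero]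
        · intro h; exact absurd (Finset.mem_univ _) h
      rwa [h3, h3] at h2
    have h1 := Fintype.card_le_of_injective r hr
    have h2 : Fintype.card (Multiplicative (ZMod p)) = p :=
      (Fintype.card_multiplicative _).trans (ZMod.card p)
    rw [Fintype.card_fun, Fintype.card_fun, h2, ZMod.card, Fintype.card_coe] at h1
    exact (Nat.pow_le_pow_iff_right hp.out.one_lt).1 h1

/-- The fixed subgroup of an endomorphism of finite order of a free group of rank `r` has rank at
most `r`. -/
theorem fixed_finite_order (N : ℕ) : ∀ (r : ℕ) (ψ : FreeGroup (Fin r) →* FreeGroup (Fin r)),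
    0 < N → (∀ x, iter ψ N x = x) → ∃ J : Finset (FreeGroup (Fin r)),
      Subgroup.closure (J : Set (FreeGroup (Fin r))) = fixedSubgroup ψ ∧ J.card ≤ r := by
  classical
  induction N using Nat.strong_induction_on with
  | _ N ih =>
    intro r ψ hN hψ
    rcases Nat.lt_or_ge 1 N with h1 | h1
    · have hp : Fact N.minFac.Prime := ⟨Nat.minFac_prime h1.ne'⟩
      obtain ⟨M, hM⟩ := Nat.minFac_dvd N
      have hM0 : 0 < M := Nat.pos_of_ne_zero fun h => by rw [h, mul_zero] at hM; omega
      have hMN : M < N := by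
        have := hp.out.two_le
        nlinarith
      have hβ : ∀ x, iter (iter ψ M) N.minFac x = x := by
        intro x
        have h2 := hψ x
        rw [iter_apply, hM, mul_comm, Function.iterate_mul] at h2
        exact h2
      obtain ⟨r', hr', e, he, hrange⟩ := exists_basis_of_locally (fixedSubgroup (iter ψ M)) r
        (fun T hT => by simpa using fixed_prime_order hβ T hT)
      have hfix : fixedSubgroup ψ ≤ e.range := by
        rw [hrange]
        intro x hx
        exact Function.iterate_fixed hx M
      obtain ⟨θ, hθ⟩ := exists_restrict e he ψ (by
        intro x
        have h2 : e x ∈ fixedSubgroup (iter ψ M) := hrange.le ⟨x, rfl⟩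
        rw [hrange]
        change iter ψ M (ψ (e x)) = ψ (e x)
        rw [iter_apply, ← Function.iterate_succ_apply, Function.iterate_succ_apply', ← iter_apply]
        exact congrArg ψ h2)
      obtain ⟨J, hJ, hJr⟩ := ih M hMN r' θ hM0 (fun x => he (by
        rw [hθ]; exact hrange.le ⟨x, rfl⟩))
      obtain ⟨J', hJ', hJr'⟩ := fixed_of_restrict he hfix hθ hJ
      exact ⟨J', hJ', hJr'.trans (hJr.trans hr')⟩
    · obtain rfl : N = 1 := by omega
      refine ⟨Finset.univ.image FreeGroup.of, ?_, Finset.card_image_le.trans (by simp)⟩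
      rw [Finset.coe_image, Finset.coe_univ, Set.image_univ, FreeGroup.closure_range_of]
      exact (eq_top_iff.2 fun x _ => hψ x).symm

/-! ### The rank inequality -/

/-- The periodic subgroup is free of some finite rank `r`, the endomorphism has finite order on it,
the fixed subgroup has rank at most `r`, and `2 r + k ≤ 2 n` for any `k` inequivalent attracting
words. -/
theorem exists_rank_bound [Fintype α] {φ : FreeGroup α →* FreeGroup α}
    (hφ : Function.Injective φ) : ∃ r : ℕ,
      (∃ J : Finset (FreeGroup α),
        Subgroup.closure (J : Set (FreeGroup α)) = fixedSubgroup φ ∧ J.card ≤ r) ∧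
      ∀ s : Finset (Quot fun (W W' : {W : InfWord α // IsAttractingFixedWord φ W}) =>
        EquivFixedWords φ W.1 W'.1), 2 * r + s.card ≤ 2 * Fintype.card α := by
  classical
  obtain ⟨r, -, e, he, hrange⟩ := exists_basis_of_locally (Per φ) (Fintype.card α)
    (fundamental_per hφ)
  have hper : ∀ x, e x ∈ Per φ := fun x => hrange.le ⟨x, rfl⟩
  obtain ⟨N, hN, hNT⟩ := (Ev.finset (s := (Finset.univ : Finset (Fin r)))
    (P := fun i k => iter φ k (e (FreeGroup.of i)) = e (FreeGroup.of i))
    fun i _ => mem_Per.1 (hper _)).exists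
  have hNe : ∀ x, iter φ N (e x) = e x := by
    have h : (iter φ N).comp e = e := FreeGroup.ext_hom _ _ fun i => hNT i (Finset.mem_univ i)
    exact fun x => DFunLike.congr_fun h x
  have hP : ∀ s ∈ Per φ, iter φ N s = s := by
    intro s hs
    obtain ⟨x, rfl⟩ := hrange.ge hs
    exact hNe x
  have hfix : fixedSubgroup φ ≤ e.range := by
    intro x hx
    rw [hrange]
    exact mem_Per_of one_pos hx
  obtain ⟨ψ, hψ⟩ := exists_restrict e he φ (by
    intro x
    rw [hrange]
    refine mem_Per_of hN ?_
    rw [iter_apply, ← Function.iterate_succ_apply, Function.iterate_succ_apply', ← iter_apply, hNe])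
  obtain ⟨J, hJ, hJr⟩ := fixed_finite_order N r ψ hN fun x => he (by rw [hψ, hNe])
  obtain ⟨J', hJ', hJr'⟩ := fixed_of_restrict he hfix hψ hJ
  refine ⟨r, ⟨J', hJ', hJr'.trans hJr⟩, fun s => ?_⟩
  obtain ⟨K, hK1, hK2, hK3⟩ := fundamental_words hφ hN hP
    (Finset.univ.image fun i : Fin r => e (FreeGroup.of i)) (by
      intro t ht
      obtain ⟨i, _, rfl⟩ := Finset.mem_image.1 ht
      exact hper _) s (fun q => (Quot.out q).1)
    (fun q _ => att_of_attracting hφ (Quot.out q).2) (fun q _ q' _ h => by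
      rw [← Quot.out_eq q, ← Quot.out_eq q']
      exact Quot.sound h)
  have hr : r ≤ K.card := by
    simpa using card_le_of_mem_closure_map e he Finset.univ K (by rwa [hrange]) fun i hi =>
      hK2 _ (Finset.mem_image_of_mem _ hi)
  omega

/-- Theorem 1.7 / 2.5: for an injective endomorphism `φ` of `F_n`
(`n ≥ 1`), the set of equivalence classes of attracting fixed words is finite and
`2·rk(fix φ) + a(φ) ≤ 2n`. -/
theorem stmt0 {n : ℕ} (hn : 1 ≤ n)
    (φ : FreeGroup (Fin n) →* FreeGroup (Fin n)) (hφ : Function.Injective φ) :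
    Finite (Quot fun (W W' : {W : InfWord (Fin n) // IsAttractingFixedWord φ W}) =>
      EquivFixedWords φ W.1 W'.1) ∧
    2 * grpRank (fixedSubgroup φ) + aCard φ ≤ 2 * (n : ℕ∞) := by
  obtain ⟨r, ⟨J, hJ, hJr⟩, hs⟩ := exists_rank_bound hφ
  rw [Fintype.card_fin] at hs
  have hfin : Finite (Quot fun (W W' : {W : InfWord (Fin n) // IsAttractingFixedWord φ W}) =>
      EquivFixedWords φ W.1 W'.1) := by
    by_contra hinf
    rw [not_finite_iff_infinite] at hinf
    obtain ⟨s, h⟩ := Infinite.exists_subset_card_eq (Quot fun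
      (W W' : {W : InfWord (Fin n) // IsAttractingFixedWord φ W}) =>
      EquivFixedWords φ W.1 W'.1) (2 * n + 1)
    have := hs s
    omega
  refine ⟨hfin, ?_⟩
  have hft := Fintype.ofFinite (Quot fun
    (W W' : {W : InfWord (Fin n) // IsAttractingFixedWord φ W}) => EquivFixedWords φ W.1 W'.1)
  have h1 : grpRank (fixedSubgroup φ) ≤ (r : ℕ∞) :=
    le_trans (b := (J.card : ℕ∞)) (sInf_le ⟨J, hJ, rfl⟩) (Nat.cast_le.2 hJr)
  have h2 := hs Finset.univ
  rw [Finset.card_univ] at h2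
  rw [aCard, ENat.card_eq_coe_fintype_card]
  calc 2 * grpRank (fixedSubgroup φ) + _ ≤ 2 * (r : ℕ∞) + _ := by gcongr
    _ ≤ 2 * (n : ℕ∞) := by exact_mod_cast h2

end ZZFix
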